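/- arXiv:1804.11217 — 10 statements merged into one kernel-verified Lean document; each statement's English description precedes it below -/
import Mathlib

section
/- A graph G is a k-letter graph if and only if (1) there is a partition V₁, V₂, …, V_p of V(G) with p ≤ k such that each V_i is either a clique or an independent set in G, and (2) there is a linear ordering L of V(G) such that for each pair of distinct indices 1 ≤ i, j ≤ p, the set of ordered pairs (x,y) ∈ V_i × V_j with {x,y} ∈ E(G) is one of the following four sets: L ∩ (V_i × V_j), L⁻¹ ∩ (V_i × V_j), V_i × V_j, or ∅ (where L is regarded as a binary relation, i.e. a set of ordered pairs). -/
/-- The letter graph of a word `w` over an alphabet `α` with decoder `P`: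
vertices are positions `1,…,n`, and `i` is adjacent to `j > i` iff `(wᵢ, wⱼ) ∈ P`. -/
def letterGraph {n : ℕ} {α : Type*} (P : α → α → Prop) (w : Fin n → α) :
    SimpleGraph (Fin n) where
  Adj i j := (i < j ∧ P (w i) (w j)) ∨ (j < i ∧ P (w j) (w i))
  symm := by
    constructor
    intro i j h
    rcases h with h | h
    · exact Or.inr h
    · exact Or.inl h
  loopless := by
    constructor
    intro i h
    rcases h with h | h <;> exact lt_irrefl i h.1

/-- `G` is a `k`-letter graph: isomorphic to the letter graph of some word over an
alphabet of size at most `k` (wlog `Fin k`) with some decoder. -/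
def IsKLetterGraph {V : Type} (G : SimpleGraph V) (k : ℕ) : Prop :=
  ∃ (n : ℕ) (P : Fin k → Fin k → Prop) (w : Fin n → Fin k),
    Nonempty (G ≃g letterGraph P w)

/-- Petkovšek's characterization of `k`-letter graphs. -/
theorem kLetterGraph_iff {V : Type} [Fintype V] (G : SimpleGraph V) (k : ℕ) :
    IsKLetterGraph G k ↔
      ∃ p : ℕ, p ≤ k ∧ ∃ f : V → Fin p,
        (∀ i : Fin p, G.IsClique (f ⁻¹' {i}) ∨
          (f ⁻¹' {i}).Pairwise fun x y => ¬ G.Adj x y) ∧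
        ∃ L : V → V → Prop, IsStrictTotalOrder V L ∧
          ∀ i j : Fin p, i ≠ j →
            ({q : V × V | f q.1 = i ∧ f q.2 = j ∧ G.Adj q.1 q.2}
                = {q : V × V | f q.1 = i ∧ f q.2 = j ∧ L q.1 q.2} ∨
             {q : V × V | f q.1 = i ∧ f q.2 = j ∧ G.Adj q.1 q.2}
                = {q : V × V | f q.1 = i ∧ f q.2 = j ∧ L q.2 q.1} ∨
             {q : V × V | f q.1 = i ∧ f q.2 = j ∧ G.Adj q.1 q.2}
                = {q : V × V | f q.1 = i ∧ f q.2 = j} ∨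
             {q : V × V | f q.1 = i ∧ f q.2 = j ∧ G.Adj q.1 q.2} = ∅) := by
  constructor
  · rintro ⟨n, P, w, ⟨e⟩⟩
    have hadj : ∀ x y, G.Adj x y ↔
        (e x < e y ∧ P (w (e x)) (w (e y))) ∨ (e y < e x ∧ P (w (e y)) (w (e x))) := by
      intro x y
      exact (e.map_rel_iff (a := x) (b := y)).symm
    have hne : ∀ x y, x ≠ y → e x < e y ∨ e y < e x := fun x y h =>
      lt_or_gt_of_ne (fun h' => h (e.injective h'))
    refine ⟨k, le_rfl, fun v => w (e v), ?_, fun x y => e x < e y, ?_, ?_⟩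
    · intro i
      by_cases h : P i i
      · left
        intro x hx y hy hxy
        have hx' : w (e x) = i := hx
        have hy' : w (e y) = i := hy
        rw [hadj, hx', hy']
        have := hne x y hxy
        tauto
      · right
        intro x hx y hy hxy
        have hx' : w (e x) = i := hx
        have hy' : w (e y) = i := hy
        rw [hadj, hx', hy']
        tauto
    · exact
        { trichotomous := fun a b h1 h2 => e.injective (le_antisymm (not_lt.1 h2) (not_lt.1 h1))
          irrefl := fun a => lt_irrefl _
          trans := fun a b c => lt_trans }
    · intro i j hij
      have key : ∀ x y, w (e x) = i → w (e y) = j →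
          ((G.Adj x y ↔ (e x < e y ∧ P i j) ∨ (e y < e x ∧ P j i)) ∧
            (e x < e y ∨ e y < e x) ∧ ¬ (e x < e y ∧ e y < e x)) := by
        intro x y hx hy
        refine ⟨by rw [hadj, hx, hy], hne x y ?_, fun h => lt_asymm h.1 h.2⟩
        rintro rfl
        exact hij (hx.symm.trans hy)
      by_cases h1 : P i j <;> by_cases h2 : P j i
      · right; right; left
        ext ⟨x, y⟩
        have := key x y
        simp only [Set.mem_setOf_eq]
        tauto
      · left
        ext ⟨x, y⟩
        have := key x y
        simp only [Set.mem_setOf_eq]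
        tauto
      · right; left
        ext ⟨x, y⟩
        have := key x y
        simp only [Set.mem_setOf_eq]
        tauto
      · right; right; right
        ext ⟨x, y⟩
        have := key x y
        simp only [Set.mem_setOf_eq, Set.mem_empty_iff_false]
        tauto
  · rintro ⟨p, hp, f, hf, L, hL, h⟩
    classical
    letI : LinearOrder V := linearOrderOfSTO L
    have hlt : ∀ x y : V, x < y ↔ L x y := fun x y => Iff.rfl
    let o : Fin (Fintype.card V) ≃o V := Fintype.orderIsoFinOfCardEq V rfl
    let P : Fin k → Fin k → Prop := fun a b =>
      ∃ x y, L x y ∧ Fin.castLE hp (f x) = a ∧ Fin.castLE hp (f y) = b ∧ G.Adj x y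
    let g : V → Fin k := fun x => Fin.castLE hp (f x)
    have key : ∀ x y, L x y → (P (g x) (g y) ↔ G.Adj x y) := by
      intro x y hxy
      constructor
      · rintro ⟨x', y', hxy', hx, hy, ha⟩
        have hx := Fin.castLE_injective hp hx
        have hy := Fin.castLE_injective hp hy
        have hnL : ¬ L y' x' := fun h' => lt_asymm ((hlt _ _).2 hxy') ((hlt _ _).2 h')
        by_cases hij : f x = f y
        · rcases hf (f x) with hc | hc
          · exact hc rfl hij.symm (ne_of_lt ((hlt _ _).2 hxy))
          · exact absurd ha (hc hx (hy.trans hij.symm) (ne_of_lt ((hlt _ _).2 hxy')))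
        · rcases h _ _ hij with h | h | h | h <;>
          · have h1 := Set.ext_iff.1 h (x, y)
            have h2 := Set.ext_iff.1 h (x', y')
            simp only [Set.mem_setOf_eq, Set.mem_empty_iff_false] at h1 h2
            tauto
      · intro ha
        exact ⟨x, y, hxy, rfl, rfl, ha⟩
    refine ⟨Fintype.card V, P, fun i => g (o i), ⟨?_⟩⟩
    refine (RelIso.mk o.toEquiv ?_ : letterGraph P (fun i => g (o i)) ≃g G).symm
    intro a b
    change G.Adj (o a) (o b) ↔ (a < b ∧ P (g (o a)) (g (o b))) ∨ (b < a ∧ P (g (o b)) (g (o a)))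
    rcases lt_trichotomy a b with hab | hab | hab
    · rw [key _ _ ((hlt _ _).1 (o.lt_iff_lt.2 hab))]
      have := lt_asymm hab
      tauto
    · subst hab
      simp
    · rw [key _ _ ((hlt _ _).1 (o.lt_iff_lt.2 hab)), G.adj_comm]
      have := lt_asymm hab
      tauto
end

section
/- Let G = (A ∪ B ∪ C, E) be a nice graph, i.e., its vertex set is partitioned into three independent sets A, B, C such that the induced bipartite subgraphs G[A ∪ B], G[B ∪ C] and G[C ∪ A] are 2K₂-free, and no three vertices a ∈ A, b ∈ B, c ∈ C induce a triangle K₃ or an anti-triangle (three pairwise non-adjacent vertices). Then A, B, and C admit linear orderings such that all three bipartite graphs G[A ∪ B], G[B ∪ C] and G[C ∪ A] are properly ordered: the ordering of A is decreasing with respect to neighbourhoods in B and increasing with respect to neighbourhoods in C, the ordering of B is increasing with respect to A and decreasing with respect to C, and the ordering of C is increasing with respect to B and decreasing with respect to A. -/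
/-- `s` is an independent set in `G`. -/
def IsIndepSetOn {V : Type} (G : SimpleGraph V) (s : Set V) : Prop :=
  s.Pairwise fun x y => ¬ G.Adj x y

/-- The graph `2K₂`: two disjoint edges. -/
def twoK2 : SimpleGraph (Fin 4) := SimpleGraph.fromEdgeSet {s(0,1), s(2,3)}

/-- `(A,B,C)` is a nice triple in `G`: `A`, `B`, `C` are pairwise disjoint independent
sets, the induced bipartite subgraphs `G[A ∪ B]`, `G[B ∪ C]`, `G[C ∪ A]` are `2K₂`-free,
and no `a ∈ A`, `b ∈ B`, `c ∈ C` induce a triangle or an anti-triangle. -/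
def NiceTriple {V : Type} (G : SimpleGraph V) (A B C : Set V) : Prop :=
  Disjoint A B ∧ Disjoint A C ∧ Disjoint B C ∧
  IsIndepSetOn G A ∧ IsIndepSetOn G B ∧ IsIndepSetOn G C ∧
  IsEmpty (twoK2 ↪g G.induce (A ∪ B)) ∧
  IsEmpty (twoK2 ↪g G.induce (B ∪ C)) ∧
  IsEmpty (twoK2 ↪g G.induce (C ∪ A)) ∧
  ∀ a ∈ A, ∀ b ∈ B, ∀ c ∈ C,
    ¬(G.Adj a b ∧ G.Adj b c ∧ G.Adj a c) ∧
    ¬(¬G.Adj a b ∧ ¬G.Adj b c ∧ ¬G.Adj a c)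

/-- `G` is nice: its vertex set is partitioned into a nice triple. -/
def IsNice {V : Type} (G : SimpleGraph V) : Prop :=
  ∃ A B C : Set V, A ∪ B ∪ C = Set.univ ∧ NiceTriple G A B C

lemma chain_aux {V : Type} (G : SimpleGraph V) (S T W : Set V)
    (hS : IsIndepSetOn G S) (hT : IsIndepSetOn G T)
    (hSW : S ⊆ W) (hTW : T ⊆ W) (hE : IsEmpty (twoK2 ↪g G.induce W))
    (x b y c : V) (hx : x ∈ S) (hy : y ∈ S) (hb : b ∈ T) (hc : c ∈ T)
    (hxb : G.Adj x b) (hyb : ¬ G.Adj y b) (hyc : G.Adj y c) (hxc : ¬ G.Adj x c) : False := by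
  have hxy : x ≠ y := by rintro rfl; exact hyb hxb
  have hbc : b ≠ c := by rintro rfl; exact hyb hyc
  have nxy : ¬ G.Adj x y := hS hx hy hxy
  have nbc : ¬ G.Adj b c := hT hb hc hbc
  have hxb' := hxb.ne
  have hyc' := hyc.ne
  have hxc' : x ≠ c := by rintro rfl; exact nxy hyc.symm
  have hyb' : y ≠ b := by rintro rfl; exact nxy hxb
  have h1 := hxb.symm
  have h2 := hyc.symm
  have h3 := fun h : G.Adj b y => hyb h.symm
  have h4 := fun h : G.Adj c x => hxc h.symm
  have h5 := fun h : G.Adj y x => nxy h.symm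
  have h6 := fun h : G.Adj c b => nbc h.symm
  refine hE.false ⟨⟨![⟨x, hSW hx⟩, ⟨b, hTW hb⟩, ⟨y, hSW hy⟩, ⟨c, hTW hc⟩], ?_⟩, ?_⟩
  · intro i j h
    fin_cases i <;> fin_cases j <;> simp_all
  · intro i j
    change G.Adj ((![⟨x, hSW hx⟩, ⟨b, hTW hb⟩, ⟨y, hSW hy⟩, ⟨c, hTW hc⟩] : Fin 4 → W) i).1
      ((![⟨x, hSW hx⟩, ⟨b, hTW hb⟩, ⟨y, hSW hy⟩, ⟨c, hTW hc⟩] : Fin 4 → W) j).1 ↔ _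
    fin_cases i <;> fin_cases j <;> simp_all [twoK2]

lemma order_aux {V : Type} [Fintype V] (G : SimpleGraph V) (S T U W W' : Set V)
    (hS : IsIndepSetOn G S) (hT : IsIndepSetOn G T) (hU : IsIndepSetOn G U)
    (hSW : S ⊆ W) (hTW : T ⊆ W) (hE : IsEmpty (twoK2 ↪g G.induce W))
    (hSW' : S ⊆ W') (hUW' : U ⊆ W') (hE' : IsEmpty (twoK2 ↪g G.induce W'))
    (hN : ∀ s ∈ S, ∀ t ∈ T, ∀ u ∈ U, ¬(G.Adj s t ∧ G.Adj t u ∧ G.Adj s u) ∧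
      ¬(¬G.Adj s t ∧ ¬G.Adj t u ∧ ¬G.Adj s u)) :
    ∃ f : V → ℕ, Set.InjOn f S ∧ ∀ x ∈ S, ∀ y ∈ S, f x ≤ f y →
      G.neighborSet x ∩ T ⊆ G.neighborSet y ∩ T ∧
      G.neighborSet y ∩ U ⊆ G.neighborSet x ∩ U := by
  classical
  have key : ∀ x ∈ S, ∀ y ∈ S,
      (G.neighborSet x ∩ T ⊆ G.neighborSet y ∩ T ∧ U \ G.neighborSet x ⊆ U \ G.neighborSet y) ∨
      (G.neighborSet y ∩ T ⊆ G.neighborSet x ∩ T ∧ U \ G.neighborSet y ⊆ U \ G.neighborSet x) := by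
    intro x hx y hy
    have c1 := fun b c => chain_aux G S T W hS hT hSW hTW hE x b y c hx hy
    have c2 := fun b c => chain_aux G S U W' hS hU hSW' hUW' hE' x b y c hx hy
    have n1 := hN x hx
    have n2 := hN y hy
    clear hN hS hT hU hSW hTW hE hSW' hUW' hE'
    by_cases p : ∃ b ∈ T, G.Adj x b ∧ ¬ G.Adj y b
    · obtain ⟨b, hb, p1, p2⟩ := p
      right
      constructor
      · rintro c ⟨hc, hcT⟩
        refine ⟨?_, hcT⟩
        by_contra h
        exact c1 b c hb hcT p1 p2 hc h
      · rintro u ⟨hu, h⟩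
        refine ⟨hu, fun h' => ?_⟩
        have := n1 b hb u hu
        have := n2 b hb u hu
        simp only [SimpleGraph.mem_neighborSet] at h h'
        tauto
    by_cases q : ∃ b ∈ T, G.Adj y b ∧ ¬ G.Adj x b
    · obtain ⟨b, hb, p1, p2⟩ := q
      left
      constructor
      · rintro c ⟨hc, hcT⟩
        refine ⟨?_, hcT⟩
        by_contra h
        exact p ⟨c, hcT, hc, h⟩
      · rintro u ⟨hu, h⟩
        refine ⟨hu, fun h' => ?_⟩
        have := n1 b hb u hu
        have := n2 b hb u hu
        simp only [SimpleGraph.mem_neighborSet] at h h'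
        tauto
    have e1 : G.neighborSet x ∩ T = G.neighborSet y ∩ T := by
      ext b
      simp only [Set.mem_inter_iff, SimpleGraph.mem_neighborSet]
      push Not at p q
      have := p b
      have := q b
      tauto
    by_cases r : U \ G.neighborSet x ⊆ U \ G.neighborSet y
    · exact Or.inl ⟨e1.le, r⟩
    · refine Or.inr ⟨e1.ge, ?_⟩
      obtain ⟨u, ⟨hu, h1⟩, h2⟩ := Set.not_subset.1 r
      have h3 : G.Adj y u := by
        by_contra h
        exact h2 ⟨hu, h⟩
      rintro v ⟨hv, h4⟩
      exact ⟨hv, fun h5 => c2 v u hv hu h5 h4 h3 h1⟩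
  let e := Fintype.equivFin V
  let g : V → ℕ := fun x => (G.neighborSet x ∩ T).ncard + (U \ G.neighborSet x).ncard
  have hlt : ∀ x, (e x : ℕ) < Fintype.card V := fun x => (e x).2
  have hg : ∀ x y, g x * Fintype.card V + e x ≤ g y * Fintype.card V + e y → g x ≤ g y := by
    intro x y h
    by_contra! h'
    have := Nat.mul_le_mul_right (Fintype.card V) (Nat.succ_le_of_lt h')
    have := hlt y
    rw [Nat.succ_mul] at *
    omega
  refine ⟨fun x => g x * Fintype.card V + e x, ?_, ?_⟩
  · intro x _ y _ h
    simp only at h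
    have h3 := le_antisymm (hg x y h.le) (hg y x h.ge)
    rw [h3] at h
    exact e.injective (Fin.ext (by omega))
  · intro x hx y hy h
    have h1 := hg x y h
    have main : G.neighborSet x ∩ T ⊆ G.neighborSet y ∩ T ∧
        U \ G.neighborSet x ⊆ U \ G.neighborSet y := by
      rcases key x hx y hy with k | ⟨k1, k2⟩
      · exact k
      · have l1 := Set.ncard_le_ncard k1 (Set.toFinite _)
        have l2 := Set.ncard_le_ncard k2 (Set.toFinite _)
        simp only [g] at h1
        exact ⟨(Set.eq_of_subset_of_ncard_le k1 (by omega) (Set.toFinite _)).ge,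
          (Set.eq_of_subset_of_ncard_le k2 (by omega) (Set.toFinite _)).ge⟩
    refine ⟨main.1, fun u hu => ⟨?_, hu.2⟩⟩
    by_contra hc
    exact (main.2 ⟨hu.2, hc⟩).2 hu.1

/-- In a nice graph, the three parts admit linear orderings (given by position
functions injective on each part) making all three bipartite graphs properly ordered:
`A` is decreasing w.r.t. `B` and increasing w.r.t. `C`, `B` is increasing w.r.t. `A`
and decreasing w.r.t. `C`, and `C` is increasing w.r.t. `B` and decreasing w.r.t. `A`. -/
theorem nice_admits_proper_orderings {V : Type} [Fintype V] (G : SimpleGraph V)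
    (A B C : Set V) (hpart : A ∪ B ∪ C = Set.univ) (hnice : NiceTriple G A B C) :
    ∃ fA fB fC : V → ℕ,
      Set.InjOn fA A ∧ Set.InjOn fB B ∧ Set.InjOn fC C ∧
      (∀ x ∈ A, ∀ y ∈ A, fA x ≤ fA y →
        G.neighborSet y ∩ B ⊆ G.neighborSet x ∩ B ∧
        G.neighborSet x ∩ C ⊆ G.neighborSet y ∩ C) ∧
      (∀ x ∈ B, ∀ y ∈ B, fB x ≤ fB y →
        G.neighborSet x ∩ A ⊆ G.neighborSet y ∩ A ∧
        G.neighborSet y ∩ C ⊆ G.neighborSet x ∩ C) ∧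
      (∀ x ∈ C, ∀ y ∈ C, fC x ≤ fC y →
        G.neighborSet x ∩ B ⊆ G.neighborSet y ∩ B ∧
        G.neighborSet y ∩ A ⊆ G.neighborSet x ∩ A) := by
  obtain ⟨-, -, -, hA, hB, hC, hAB, hBC, hCA, hN⟩ := hnice
  obtain ⟨fA, iA, oA⟩ := order_aux G A C B (C ∪ A) (A ∪ B) hA hC hB
    Set.subset_union_right Set.subset_union_left hCA
    Set.subset_union_left Set.subset_union_right hAB (by
      intro a ha c hc b hb
      have := hN a ha b hb c hc
      simp only [G.adj_comm c b]
      tauto)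
  obtain ⟨fB, iB, oB⟩ := order_aux G B A C (A ∪ B) (B ∪ C) hB hA hC
    Set.subset_union_right Set.subset_union_left hAB
    Set.subset_union_left Set.subset_union_right hBC (by
      intro b hb a ha c hc
      have := hN a ha b hb c hc
      simp only [G.adj_comm b a]
      tauto)
  obtain ⟨fC, iC, oC⟩ := order_aux G C B A (B ∪ C) (C ∪ A) hC hB hA
    Set.subset_union_right Set.subset_union_left hBC
    Set.subset_union_left Set.subset_union_right hCA (by
      intro c hc b hb a ha
      have := hN a ha b hb c hc
      simp only [G.adj_comm c b, G.adj_comm b a, G.adj_comm c a]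
      tauto)
  exact ⟨fA, fB, fC, iA, iB, iC, fun x hx y hy h => (oA x hx y hy h).symm, oB, oC⟩
end

section
/- A graph G is a 3-letter graph with the decoder {(a,b),(b,c),(c,a)} over the alphabet {a,b,c} if and only if G is nice, i.e., its vertex set can be partitioned into three independent sets A, B, C such that the induced bipartite subgraphs G[A ∪ B], G[B ∪ C] and G[C ∪ A] are 2K₂-free, and no three vertices a ∈ A, b ∈ B, c ∈ C induce a triangle K₃ or an anti-triangle (three pairwise non-adjacent vertices). -/
/-- The cyclic decoder `{(a,b),(b,c),(c,a)}` over the alphabet `{a,b,c} = Fin 3`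
(`a = 0`, `b = 1`, `c = 2`). -/
def cyclicDecoder : Fin 3 → Fin 3 → Prop := fun x y =>
  (x = 0 ∧ y = 1) ∨ (x = 1 ∧ y = 2) ∨ (x = 2 ∧ y = 0)

/-- `G` is a 3-letter graph with the decoder `{(a,b),(b,c),(c,a)}`. -/
def IsCyclic3Letter {V : Type} (G : SimpleGraph V) : Prop :=
  ∃ (n : ℕ) (w : Fin n → Fin 3), Nonempty (G ≃g letterGraph cyclicDecoder w)

theorem twoK2_adj_iff (i j : Fin 4) : twoK2.Adj i j ↔
    (i = 0 ∧ j = 1) ∨ (i = 1 ∧ j = 0) ∨ (i = 2 ∧ j = 3) ∨ (i = 3 ∧ j = 2) := by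
  revert i j
  simp only [twoK2, SimpleGraph.fromEdgeSet_adj, Set.mem_insert_iff, Set.mem_singleton_iff,
    Sym2.eq_iff]
  decide

theorem isEmpty_twoK2_iff {V : Type} (G : SimpleGraph V) (A B : Set V)
    (hA : IsIndepSetOn G A) (hB : IsIndepSetOn G B) :
    IsEmpty (twoK2 ↪g G.induce (A ∪ B)) ↔
    ∀ a ∈ A, ∀ a' ∈ A, ∀ b ∈ B, ∀ b' ∈ B,
      ¬ (G.Adj a b ∧ G.Adj a' b' ∧ ¬ G.Adj a b' ∧ ¬ G.Adj a' b) := by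
  have hA' : ∀ x ∈ A, ∀ y ∈ A, ¬ G.Adj x y := fun x hx y hy h => hA hx hy h.ne h
  have hB' : ∀ x ∈ B, ∀ y ∈ B, ¬ G.Adj x y := fun x hx y hy h => hB hx hy h.ne h
  have hs : ∀ x y, G.Adj x y → G.Adj y x := fun x y h => h.symm
  constructor
  · rintro ⟨hE⟩ a ha a' ha' b hb b' hb' ⟨h1, h2, h3, h4⟩
    let f : Fin 4 → ↥(A ∪ B) := ![⟨a, Or.inl ha⟩, ⟨b, Or.inr hb⟩, ⟨a', Or.inl ha'⟩, ⟨b', Or.inr hb'⟩]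
    have hadj : ∀ i j, (G.induce (A ∪ B)).Adj (f i) (f j) ↔ twoK2.Adj i j := by
      intro i j
      rw [twoK2_adj_iff, SimpleGraph.induce_adj]
      have := hA' a ha a' ha'
      have := hB' b hb b' hb'
      fin_cases i <;> fin_cases j <;> simp [f, G.adj_comm] <;> grind
    refine hE ⟨⟨f, ?_⟩, hadj _ _⟩
    intro i j hij
    have h0 : ∀ k, twoK2.Adj i k ↔ twoK2.Adj j k := by
      intro k
      rw [← hadj, ← hadj, hij]
    simp only [twoK2_adj_iff] at h0
    revert h0
    clear hij
    revert i j
    decide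
  · intro h
    refine ⟨fun f => ?_⟩
    have hadj : ∀ i j, G.Adj (f i).1 (f j).1 ↔ twoK2.Adj i j := fun i j => f.map_rel_iff
    have m := fun i => (f i).2
    have e1 := (hadj 0 1).2 (by simp [twoK2_adj_iff])
    have e2 := (hadj 2 3).2 (by simp [twoK2_adj_iff])
    have n1 : ¬ _ := fun q => absurd ((hadj 0 2).1 q) (by simp [twoK2_adj_iff])
    have n2 : ¬ _ := fun q => absurd ((hadj 0 3).1 q) (by simp [twoK2_adj_iff])
    have n3 : ¬ _ := fun q => absurd ((hadj 1 2).1 q) (by simp [twoK2_adj_iff])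
    have n4 : ¬ _ := fun q => absurd ((hadj 1 3).1 q) (by simp [twoK2_adj_iff])
    have m0 := m 0
    have m1 := m 1
    have m2 := m 2
    have m3 := m 3
    generalize (f 0).1 = x0 at *
    generalize (f 1).1 = x1 at *
    generalize (f 2).1 = x2 at *
    generalize (f 3).1 = x3 at *
    clear hadj m f
    rw [Set.mem_union] at m0 m1 m2 m3
    have c1 : (x0 ∈ A ∧ x1 ∈ B) ∨ (x0 ∈ B ∧ x1 ∈ A) := by grind
    have c2 : (x2 ∈ A ∧ x3 ∈ B) ∨ (x2 ∈ B ∧ x3 ∈ A) := by grind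
    rcases c1 with ⟨p, q⟩ | ⟨p, q⟩ <;> rcases c2 with ⟨r, s⟩ | ⟨r, s⟩
    · exact h x0 p x2 r x1 q x3 s ⟨e1, e2, n2, fun h => n3 h.symm⟩
    · exact h x0 p x3 s x1 q x2 r ⟨e1, e2.symm, n1, fun h => n4 h.symm⟩
    · exact h x1 q x2 r x0 p x3 s ⟨e1.symm, e2, n4, fun h => n1 h.symm⟩
    · exact h x1 q x3 s x0 p x2 r ⟨e1.symm, e2.symm, n3, fun h => n2 h.symm⟩

theorem exists_linear {V : Type} (c : V → Fin 3) (R : V → V → Prop)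
    (hne : ∀ u v, R u v → c u ≠ c v) (hasym : ∀ u v, R u v → ¬ R v u)
    (htot : ∀ u v, c u ≠ c v → R u v ∨ R v u)
    (h3 : ∀ u v w, R u v → R v w → ¬ R w u)
    (h4 : ∀ u x y v, c u = c y → c x = c v → R u x → R x y → R y v → ¬ R v u) :
    ∃ s : V → V → Prop, IsLinearOrder V s ∧ ∀ u v, R u v → s u v := by
  have key : ∀ u x y v, R u x → R x y → R y v → R u v ∨ ∃ w, R u w ∧ R w v := by
    intro u x y v h1 h2 h5
    by_cases e1 : c u = c y
    · by_cases e2 : c x = c v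
      · left
        have : c u ≠ c v := e2 ▸ hne _ _ h1
        exact (htot _ _ this).resolve_right (h4 u x y v e1 e2 h1 h2 h5)
      · exact Or.inr ⟨x, h1, (htot _ _ e2).resolve_right (h3 _ _ _ h2 h5)⟩
    · exact Or.inr ⟨y, (htot _ _ e1).resolve_right (h3 _ _ _ h1 h2), h5⟩
  let S : V → V → Prop := fun u v => u = v ∨ R u v ∨ ∃ w, R u w ∧ R w v
  have hp : IsPartialOrder V S :=
    { refl := fun _ => Or.inl rfl
      trans := by
        intro u v w h1 h2
        simp only [S] at *
        grind
      antisymm := by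
        intro u v h1 h2
        simp only [S] at *
        grind }
  obtain ⟨s, hs, hle⟩ := extend_partialOrder S
  exact ⟨s, hs, fun u v h => hle u v (Or.inr (Or.inl h))⟩

theorem exists_pos {V : Type} [Fintype V] (s : V → V → Prop) (hs : IsLinearOrder V s) :
    ∃ (n : ℕ) (e : V ≃ Fin n), ∀ u v, s u v → e u ≤ e v := by
  classical
  letI : LinearOrder V :=
    { le := s
      le_refl := hs.refl
      le_trans := hs.trans
      le_antisymm := hs.antisymm
      le_total := hs.total
      toDecidableLE := Classical.decRel _ }
  refine ⟨Fintype.card V, (Fintype.orderIsoFinOfCardEq V rfl).symm.toEquiv, ?_⟩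
  intro u v h
  exact (Fintype.orderIsoFinOfCardEq V rfl).symm.monotone h

theorem nice_of_letter {V : Type} (G : SimpleGraph V) (h : IsCyclic3Letter G) : IsNice G := by
  obtain ⟨n, w, ⟨e⟩⟩ := h
  obtain ⟨p, hadj⟩ : ∃ p : V → Fin n, ∀ x y, G.Adj x y ↔
      (p x < p y ∧ cyclicDecoder (w (p x)) (w (p y))) ∨
      (p y < p x ∧ cyclicDecoder (w (p y)) (w (p x))) :=
    ⟨e, fun x y => e.map_rel_iff.symm⟩
  clear e
  simp only [cyclicDecoder] at hadj
  have hI : ∀ k, IsIndepSetOn G {v | w (p v) = k} := by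
    intro k x hx y hy _ h
    rw [hadj] at h
    simp only [Set.mem_ofPred_eq] at hx hy
    rw [hx, hy] at h
    revert h
    fin_cases k <;> simp
  refine ⟨{v | w (p v) = 0}, {v | w (p v) = 1}, {v | w (p v) = 2}, ?_, ?_, ?_, ?_,
    hI 0, hI 1, hI 2, ?_, ?_, ?_, ?_⟩
  · ext v
    simp only [Set.mem_union, Set.mem_ofPred_eq, Set.mem_univ, iff_true]
    generalize w (p v) = k
    revert k; decide
  · rw [Set.disjoint_left]; intro v h1 h2; simp_all
  · rw [Set.disjoint_left]; intro v h1 h2; simp_all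
  · rw [Set.disjoint_left]; intro v h1 h2; simp_all
  · rw [isEmpty_twoK2_iff _ _ _ (hI _) (hI _)]
    intro a ha a' ha' b hb b' hb'
    simp only [Set.mem_ofPred_eq] at *
    simp only [hadj, ha, ha', hb, hb']
    simp
    grind
  · rw [isEmpty_twoK2_iff _ _ _ (hI _) (hI _)]
    intro a ha a' ha' b hb b' hb'
    simp only [Set.mem_ofPred_eq] at *
    simp only [hadj, ha, ha', hb, hb']
    simp
    grind
  · rw [isEmpty_twoK2_iff _ _ _ (hI _) (hI _)]
    intro a ha a' ha' b hb b' hb'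
    simp only [Set.mem_ofPred_eq] at *
    simp only [hadj, ha, ha', hb, hb']
    simp
    grind
  · intro a ha b hb c hc
    simp only [Set.mem_ofPred_eq] at *
    have : p a ≠ p b := fun h => by simp_all
    have : p a ≠ p c := fun h => by simp_all
    have : p b ≠ p c := fun h => by simp_all
    simp only [hadj, ha, hb, hc]
    simp
    grind

set_option maxHeartbeats 2000000 in
theorem letter_of_nice {V : Type} [Fintype V] (G : SimpleGraph V) (h : IsNice G) :
    IsCyclic3Letter G := by
  classical
  obtain ⟨A, B, C, hU, dAB, dAC, dBC, iA, iB, iC, eAB, eBC, eCA, ht⟩ := h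
  rw [isEmpty_twoK2_iff _ _ _ iA iB] at eAB
  rw [isEmpty_twoK2_iff _ _ _ iB iC] at eBC
  rw [isEmpty_twoK2_iff _ _ _ iC iA] at eCA
  rw [Set.disjoint_left] at dAB dAC dBC
  have hU' : ∀ v, v ∈ A ∨ v ∈ B ∨ v ∈ C := by
    intro v
    have : v ∈ A ∪ B ∪ C := hU ▸ Set.mem_univ v
    simpa [or_assoc] using this
  obtain ⟨c, hc0, hc1, hc2⟩ : ∃ c : V → Fin 3, (∀ v, v ∈ A ↔ c v = 0) ∧ (∀ v, v ∈ B ↔ c v = 1) ∧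
      (∀ v, v ∈ C ↔ c v = 2) := by
    refine ⟨fun v => if v ∈ A then 0 else if v ∈ B then 1 else 2, ?_, ?_, ?_⟩ <;> intro v <;>
      have h1 := @dAB v <;> have h2 := @dAC v <;> have h3 := @dBC v <;> have h4 := hU' v <;>
      by_cases a : v ∈ A <;> by_cases b : v ∈ B <;> simp_all
  have hsame : ∀ u v, c u = c v → ¬ G.Adj u v := by
    intro u v huv hadj
    rcases hU' u with h | h | h
    · exact iA h ((hc0 v).2 (huv ▸ (hc0 u).1 h)) hadj.ne hadj
    · exact iB h ((hc1 v).2 (huv ▸ (hc1 u).1 h)) hadj.ne hadj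
    · exact iC h ((hc2 v).2 (huv ▸ (hc2 u).1 h)) hadj.ne hadj
  have hcov : ∀ v, c v = 0 ∨ c v = 1 ∨ c v = 2 := by
    intro v; generalize c v = k; revert k; decide
  simp only [hc0, hc1, hc2] at eAB eBC eCA ht
  clear hU dAB dAC dBC iA iB iC hU' hc0 hc1 hc2
  let R : V → V → Prop := fun u v =>
    (cyclicDecoder (c u) (c v) ∧ G.Adj u v) ∨ (cyclicDecoder (c v) (c u) ∧ ¬ G.Adj u v)
  have hsymm : ∀ u v, G.Adj u v ↔ G.Adj v u := fun u v => G.adj_comm u v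
  obtain ⟨s, hs, hRs⟩ := exists_linear c R
    (by
      intro u v h
      simp only [R, cyclicDecoder] at h
      rcases hcov u with hu | hu | hu <;> rcases hcov v with hv | hv | hv <;>
        simp [hu, hv] at h ⊢)
    (by
      intro u v h
      simp only [R, cyclicDecoder] at h ⊢
      rw [hsymm v u]
      rcases hcov u with hu | hu | hu <;> rcases hcov v with hv | hv | hv <;>
        simp [hu, hv] at h ⊢ <;> exact h)
    (by
      intro u v h
      simp only [R, cyclicDecoder]
      rw [hsymm v u]
      rcases hcov u with hu | hu | hu <;> rcases hcov v with hv | hv | hv <;>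
        simp [hu, hv] at h ⊢ <;> tauto)
    (by
      intro u v w h1 h2 h3
      simp only [R, cyclicDecoder] at h1 h2 h3
      rcases hcov u with hu | hu | hu <;> rcases hcov v with hv | hv | hv <;>
        simp [hu, hv] at h1 <;> rcases hcov w with hw | hw | hw <;>
        simp [hu, hv, hw] at h2 h3 <;> grind)
    (by
      intro u x y v e1 e2 h1 h2 h3 h4
      simp only [R, cyclicDecoder, ← e1, ← e2] at h1 h2 h3 h4
      rcases hcov u with hu | hu | hu <;> rcases hcov x with hv | hv | hv <;>
        simp [hu, hv] at h1 h2 h3 h4 <;> grind)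
  obtain ⟨n, e, he⟩ := exists_pos s hs
  have hlt : ∀ u v, R u v → c u ≠ c v → e u < e v := by
    intro u v h hne
    refine lt_of_le_of_ne (he _ _ (hRs _ _ h)) fun h => hne (by rw [e.injective h])
  refine ⟨n, c ∘ e.symm, ⟨⟨e, ?_⟩⟩⟩
  intro u v
  simp only [letterGraph, Function.comp, Equiv.symm_apply_apply]
  have l1 := hlt u v
  have l2 := hlt v u
  have l3 := hsame u v
  simp only [R, cyclicDecoder] at l1 l2 ⊢
  rw [hsymm v u] at l2
  rcases hcov u with hu | hu | hu <;> rcases hcov v with hv | hv | hv <;>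
    simp [hu, hv] at l1 l2 l3 ⊢ <;> grind

/-- A graph is a 3-letter graph with the decoder `{(a,b),(b,c),(c,a)}` iff it is nice. -/
theorem cyclic3Letter_iff_nice {V : Type} [Fintype V] (G : SimpleGraph V) :
    IsCyclic3Letter G ↔ IsNice G :=
  ⟨nice_of_letter G, letter_of_nice G⟩
end

section
/- Let G be a graph and let H₁ and H₂ be nice induced subgraphs of G with disjoint vertex sets V(H₁) = A₁ ∪ B₁ ∪ C₁ and V(H₂) = A₂ ∪ B₂ ∪ C₂ (with the respective nice partitions). If the subgraphs of G induced by A₁ ∪ B₂, by B₁ ∪ C₂ and by C₁ ∪ A₂ are complete bipartite (every vertex of the first set adjacent to every vertex of the second), and the subgraphs induced by A₁ ∪ A₂, A₁ ∪ C₂, B₁ ∪ A₂, B₁ ∪ B₂, C₁ ∪ B₂ and C₁ ∪ C₂ are edgeless, then the subgraph of G induced by V(H₁) ∪ V(H₂) is nice with the partition (A₁ ∪ A₂) ∪ (B₁ ∪ B₂) ∪ (C₁ ∪ C₂). -/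
theorem free_iff {V : Type} (G : SimpleGraph V) (X Y : Set V)
    (hX : IsIndepSetOn G X) (hY : IsIndepSetOn G Y) :
    IsEmpty (twoK2 ↪g G.induce (X ∪ Y)) ↔
      ∀ a ∈ X, ∀ b ∈ Y, ∀ a' ∈ X, ∀ b' ∈ Y, G.Adj a b → G.Adj a' b' →
        G.Adj a b' ∨ G.Adj a' b := by
  have hX' : ∀ x ∈ X, ∀ y ∈ X, ¬ G.Adj x y := fun x hx y hy h => hX hx hy h.ne h
  have hY' : ∀ x ∈ Y, ∀ y ∈ Y, ¬ G.Adj x y := fun x hx y hy h => hY hx hy h.ne h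
  constructor
  · intro he a ha b hb a' ha' b' hb' h1 h2
    by_contra hn
    push Not at hn
    obtain ⟨n1, n2⟩ := hn
    have n1' : ¬ G.Adj b' a := fun h : G.Adj b' a => n1 h.symm
    have n2' : ¬ G.Adj b a' := fun h : G.Adj b a' => n2 h.symm
    have h1' := h1.symm
    have h2' := h2.symm
    have x1 := hX' a ha a' ha'
    have x2 := hX' a' ha' a ha
    have y1 := hY' b hb b' hb'
    have y2 := hY' b' hb' b hb
    have e1 : a ≠ b := h1.ne
    have e2 : a' ≠ b' := h2.ne
    have e3 : a ≠ a' := by rintro rfl; exact n1 h2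
    have e4 : b ≠ b' := by rintro rfl; exact n1 h1
    have e5 : a ≠ b' := by rintro rfl; exact x2 h2
    have e6 : a' ≠ b := by rintro rfl; exact x1 h1
    let f : Fin 4 → ↥(X ∪ Y) :=
      ![⟨a, Or.inl ha⟩, ⟨b, Or.inr hb⟩, ⟨a', Or.inl ha'⟩, ⟨b', Or.inr hb'⟩]
    refine he.false ⟨⟨f, ?_⟩, ?_⟩
    · intro i j hij
      fin_cases i <;> fin_cases j <;> simp_all [f, Subtype.ext_iff, eq_comm]
    · intro i j
      change G.Adj (f i).1 (f j).1 ↔ twoK2.Adj i j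
      fin_cases i <;> fin_cases j <;>
        simp [f, twoK2, h1, h2, h1', h2', n1, n2, n1', n2', x1, x2, y1, y2]
  · intro h
    refine ⟨fun f => ?_⟩
    have adj : ∀ i j, G.Adj (f i).1 (f j).1 ↔ twoK2.Adj i j := fun i j => f.map_rel_iff
    have p01 : G.Adj (f 0).1 (f 1).1 := (adj _ _).2 (by simp [twoK2])
    have p23 : G.Adj (f 2).1 (f 3).1 := (adj _ _).2 (by simp [twoK2])
    have p02 : ¬ G.Adj (f 0).1 (f 2).1 := fun h => by simpa [twoK2] using (adj _ _).1 h
    have p03 : ¬ G.Adj (f 0).1 (f 3).1 := fun h => by simpa [twoK2] using (adj _ _).1 h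
    have p12 : ¬ G.Adj (f 1).1 (f 2).1 := fun h => by simpa [twoK2] using (adj _ _).1 h
    have p13 : ¬ G.Adj (f 1).1 (f 3).1 := fun h => by simpa [twoK2] using (adj _ _).1 h
    have m0 := (f 0).2
    have m1 := (f 1).2
    have m2 := (f 2).2
    have m3 := (f 3).2
    generalize (f 0).1 = a at *
    generalize (f 1).1 = b at *
    generalize (f 2).1 = c at *
    generalize (f 3).1 = d at *
    have s := fun x y => G.adj_comm x y
    rcases m0 with m0 | m0 <;> rcases m1 with m1 | m1
    · exact hX' _ m0 _ m1 p01
    · rcases m2 with m2 | m2 <;> rcases m3 with m3 | m3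
      · exact hX' _ m2 _ m3 p23
      · grind
      · have := h a m0 b m1 d m3 c m2 p01 p23.symm
        grind
      · exact hY' _ m2 _ m3 p23
    · rcases m2 with m2 | m2 <;> rcases m3 with m3 | m3
      · exact hX' _ m2 _ m3 p23
      · have := h b m1 a m0 c m2 d m3 p01.symm p23
        grind
      · have := h b m1 a m0 d m3 c m2 p01.symm p23.symm
        grind
      · exact hY' _ m2 _ m3 p23
    · exact hY' _ m0 _ m1 p01

theorem indep_union {V : Type} {G : SimpleGraph V} {X Y : Set V}
    (hX : IsIndepSetOn G X) (hY : IsIndepSetOn G Y)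
    (h : ∀ x ∈ X, ∀ y ∈ Y, ¬ G.Adj x y) : IsIndepSetOn G (X ∪ Y) := by
  rintro x (hx | hx) y (hy | hy) hne
  · exact hX hx hy hne
  · exact h x hx y hy
  · exact fun e => h y hy x hx e.symm
  · exact hY hx hy hne

theorem free_union {V : Type} {G : SimpleGraph V} {X₁ Y₁ X₂ Y₂ : Set V}
    (hX₁ : IsIndepSetOn G X₁) (hY₁ : IsIndepSetOn G Y₁)
    (hX₂ : IsIndepSetOn G X₂) (hY₂ : IsIndepSetOn G Y₂)
    (hX : ∀ x ∈ X₁, ∀ y ∈ X₂, ¬ G.Adj x y) (hY : ∀ x ∈ Y₁, ∀ y ∈ Y₂, ¬ G.Adj x y)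
    (hc : ∀ x ∈ X₁, ∀ y ∈ Y₂, G.Adj x y) (he : ∀ x ∈ Y₁, ∀ y ∈ X₂, ¬ G.Adj x y)
    (h1 : IsEmpty (twoK2 ↪g G.induce (X₁ ∪ Y₁)))
    (h2 : IsEmpty (twoK2 ↪g G.induce (X₂ ∪ Y₂))) :
    IsEmpty (twoK2 ↪g G.induce ((X₁ ∪ X₂) ∪ (Y₁ ∪ Y₂))) := by
  rw [free_iff _ _ _ hX₁ hY₁] at h1
  rw [free_iff _ _ _ hX₂ hY₂] at h2
  rw [free_iff _ _ _ (indep_union hX₁ hX₂ hX) (indep_union hY₁ hY₂ hY)]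
  intro a ha b hb a' ha' b' hb' e e'
  have he1 : ∀ x ∈ X₂, ∀ y ∈ Y₁, ¬ G.Adj x y := fun x hx y hy k => he y hy x hx k.symm
  rcases ha with ha | ha <;> rcases hb with hb | hb <;> rcases ha' with ha' | ha' <;>
    rcases hb' with hb' | hb' <;> grind

/-- The joining lemma: two vertex-disjoint nice triples whose parts are joined
completely between `A₁B₂`, `B₁C₂`, `C₁A₂` and not at all between the remaining six
pairs combine into a nice triple. -/
theorem joining_lemma {V : Type} [Fintype V] (G : SimpleGraph V)
    (A₁ B₁ C₁ A₂ B₂ C₂ : Set V)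
    (h₁ : NiceTriple G A₁ B₁ C₁) (h₂ : NiceTriple G A₂ B₂ C₂)
    (hdisj : Disjoint (A₁ ∪ B₁ ∪ C₁) (A₂ ∪ B₂ ∪ C₂))
    (hA₁B₂ : ∀ x ∈ A₁, ∀ y ∈ B₂, G.Adj x y)
    (hB₁C₂ : ∀ x ∈ B₁, ∀ y ∈ C₂, G.Adj x y)
    (hC₁A₂ : ∀ x ∈ C₁, ∀ y ∈ A₂, G.Adj x y)
    (hA₁A₂ : ∀ x ∈ A₁, ∀ y ∈ A₂, ¬ G.Adj x y)
    (hA₁C₂ : ∀ x ∈ A₁, ∀ y ∈ C₂, ¬ G.Adj x y)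
    (hB₁A₂ : ∀ x ∈ B₁, ∀ y ∈ A₂, ¬ G.Adj x y)
    (hB₁B₂ : ∀ x ∈ B₁, ∀ y ∈ B₂, ¬ G.Adj x y)
    (hC₁B₂ : ∀ x ∈ C₁, ∀ y ∈ B₂, ¬ G.Adj x y)
    (hC₁C₂ : ∀ x ∈ C₁, ∀ y ∈ C₂, ¬ G.Adj x y) :
    NiceTriple G (A₁ ∪ A₂) (B₁ ∪ B₂) (C₁ ∪ C₂) := by
  obtain ⟨a1, a2, a3, iA₁, iB₁, iC₁, f1, f2, f3, t1⟩ := h₁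
  obtain ⟨b1, b2, b3, iA₂, iB₂, iC₂, g1, g2, g3, t2⟩ := h₂
  have hd := Set.disjoint_left.1 hdisj
  rw [Set.disjoint_left] at a1 a2 a3 b1 b2 b3
  refine ⟨?_, ?_, ?_, indep_union iA₁ iA₂ hA₁A₂, indep_union iB₁ iB₂ hB₁B₂,
    indep_union iC₁ iC₂ hC₁C₂,
    free_union iA₁ iB₁ iA₂ iB₂ hA₁A₂ hB₁B₂ hA₁B₂ hB₁A₂ f1 g1,
    free_union iB₁ iC₁ iB₂ iC₂ hB₁B₂ hC₁C₂ hB₁C₂ hC₁B₂ f2 g2,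
    free_union iC₁ iA₁ iC₂ iA₂ hC₁C₂ hA₁A₂ hC₁A₂ hA₁C₂ f3 g3, ?_⟩
  · rw [Set.disjoint_left]; simp only [Set.mem_union] at hd ⊢; grind
  · rw [Set.disjoint_left]; simp only [Set.mem_union] at hd ⊢; grind
  · rw [Set.disjoint_left]; simp only [Set.mem_union] at hd ⊢; grind
  · have s := fun x y => G.adj_comm x y
    rintro a (ha | ha) b (hb | hb) c (hc | hc)
    · exact t1 a ha b hb c hc
    · have := hB₁C₂ b hb c hc; have := hA₁C₂ a ha c hc; tauto
    · have := hA₁B₂ a ha b hb; have := hC₁B₂ c hc b hb; have := s b c; tauto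
    · have := hA₁B₂ a ha b hb; have := hA₁C₂ a ha c hc; tauto
    · have := hC₁A₂ c hc a ha; have := hB₁A₂ b hb a ha
      have := s a b; have := s a c; tauto
    · have := hB₁C₂ b hb c hc; have := hB₁A₂ b hb a ha; have := s a b; tauto
    · have := hC₁A₂ c hc a ha; have := hC₁B₂ c hc b hb
      have := s b c; have := s a c; tauto
    · exact t2 a ha b hb c hc
end

section
/- A graph G is a 3-letter graph with the decoder {(a,b),(b,c),(c,a)} over the alphabet {a,b,c} if and only if G contains no induced subgraph isomorphic to any of K₃ (the triangle), 2K₂ + K₁ (two disjoint edges plus an isolated vertex), C₅ + K₁ (a chordless 5-cycle plus an isolated vertex), or C₆ (the chordless 6-cycle). -/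
/-- The triangle `K₃`. -/
def K3 : SimpleGraph (Fin 3) := ⊤

/-- The graph `2K₂ + K₁`: two disjoint edges plus an isolated vertex. -/
def twoK2K1 : SimpleGraph (Fin 5) := SimpleGraph.fromEdgeSet {s(0,1), s(2,3)}

/-- The graph `C₅ + K₁`: a chordless 5-cycle plus an isolated vertex. -/
def C5K1 : SimpleGraph (Fin 6) :=
  SimpleGraph.fromEdgeSet {s(0,1), s(1,2), s(2,3), s(3,4), s(4,0)}

/-- The chordless 6-cycle `C₆`. -/
def C6 : SimpleGraph (Fin 6) :=
  SimpleGraph.fromEdgeSet {s(0,1), s(1,2), s(2,3), s(3,4), s(4,5), s(5,0)}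


theorem emb_K3 {V : Type} {G : SimpleGraph V} {a b c : V} (h1 : G.Adj a b) (h2 : G.Adj b c)
    (h3 : G.Adj a c) : Nonempty (K3 ↪g G) := by
  have key : ∀ i j : Fin 3, G.Adj (![a, b, c] i) (![a, b, c] j) ↔ K3.Adj i j := by
    intro i j
    fin_cases i <;> fin_cases j <;> simp [K3] <;> grind [SimpleGraph.adj_comm]
  refine ⟨⟨⟨![a, b, c], ?_⟩, key _ _⟩⟩
  intro i j h
  fin_cases i <;> fin_cases j <;> simp at h ⊢ <;> grind [SimpleGraph.adj_comm, SimpleGraph.Adj.ne]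

theorem emb_twoK2K1 {V : Type} {G : SimpleGraph V} {p q r s t : V} (h1 : G.Adj p q)
    (h2 : G.Adj r s) (n1 : ¬ G.Adj p r) (n2 : ¬ G.Adj p s) (n3 : ¬ G.Adj q r)
    (n4 : ¬ G.Adj q s) (n5 : ¬ G.Adj p t) (n6 : ¬ G.Adj q t) (n7 : ¬ G.Adj r t)
    (n8 : ¬ G.Adj s t) : Nonempty (twoK2K1 ↪g G) := by
  have key : ∀ i j : Fin 5, G.Adj (![p, q, r, s, t] i) (![p, q, r, s, t] j) ↔
      twoK2K1.Adj i j := by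
    intro i j
    fin_cases i <;> fin_cases j <;> simp [twoK2K1] <;> grind [SimpleGraph.adj_comm, SimpleGraph.Adj.ne]
  refine ⟨⟨⟨![p, q, r, s, t], ?_⟩, key _ _⟩⟩
  intro i j h
  fin_cases i <;> fin_cases j <;> simp at h ⊢ <;> grind [SimpleGraph.adj_comm, SimpleGraph.Adj.ne]

theorem emb_C5K1 {V : Type} {G : SimpleGraph V} {a b c d e t : V} (h1 : G.Adj a b)
    (h2 : G.Adj b c) (h3 : G.Adj c d) (h4 : G.Adj d e) (h5 : G.Adj e a)
    (n1 : ¬ G.Adj a c) (n2 : ¬ G.Adj b d) (n3 : ¬ G.Adj c e) (n4 : ¬ G.Adj d a)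
    (n5 : ¬ G.Adj e b) (t1 : ¬ G.Adj a t) (t2 : ¬ G.Adj b t) (t3 : ¬ G.Adj c t)
    (t4 : ¬ G.Adj d t) (t5 : ¬ G.Adj e t) : Nonempty (C5K1 ↪g G) := by
  have key : ∀ i j : Fin 6, G.Adj (![a, b, c, d, e, t] i) (![a, b, c, d, e, t] j) ↔
      C5K1.Adj i j := by
    intro i j
    fin_cases i <;> fin_cases j <;> simp [C5K1] <;> grind [SimpleGraph.adj_comm, SimpleGraph.Adj.ne]
  refine ⟨⟨⟨![a, b, c, d, e, t], ?_⟩, key _ _⟩⟩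
  intro i j h
  fin_cases i <;> fin_cases j <;> simp at h ⊢ <;> grind [SimpleGraph.adj_comm, SimpleGraph.Adj.ne]

theorem emb_C6 {V : Type} {G : SimpleGraph V} {a b c d e t : V} (h1 : G.Adj a b)
    (h2 : G.Adj b c) (h3 : G.Adj c d) (h4 : G.Adj d e) (h5 : G.Adj e t) (h6 : G.Adj t a)
    (n1 : ¬ G.Adj a c) (n2 : ¬ G.Adj b d) (n3 : ¬ G.Adj c e) (n4 : ¬ G.Adj d t)
    (n5 : ¬ G.Adj e a) (n6 : ¬ G.Adj t b) (t1 : ¬ G.Adj a d) (t2 : ¬ G.Adj b e)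
    (t3 : ¬ G.Adj c t) : Nonempty (C6 ↪g G) := by
  have key : ∀ i j : Fin 6, G.Adj (![a, b, c, d, e, t] i) (![a, b, c, d, e, t] j) ↔
      C6.Adj i j := by
    intro i j
    fin_cases i <;> fin_cases j <;> simp [C6] <;> grind [SimpleGraph.adj_comm, SimpleGraph.Adj.ne]
  refine ⟨⟨⟨![a, b, c, d, e, t], ?_⟩, key _ _⟩⟩
  intro i j h
  fin_cases i <;> fin_cases j <;> simp at h ⊢ <;> grind [SimpleGraph.adj_comm, SimpleGraph.Adj.ne]

theorem dec_iff (x y : Fin 3) : cyclicDecoder x y ↔ y = x + 1 := by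
  unfold cyclicDecoder; revert x y; decide

set_option maxHeartbeats 1600000 in
theorem build {V : Type} [Fintype V] (G : SimpleGraph V) (part : V → Fin 3)
    (hind : ∀ u v, G.Adj u v → part u ≠ part v)
    (hK : ∀ a b c, G.Adj a b → G.Adj b c → G.Adj a c → False)
    (htri : ∀ a b c, part a = 0 → part b = 1 → part c = 2 →
      ¬ G.Adj a b → ¬ G.Adj b c → ¬ G.Adj a c → False)
    (h2 : ∀ a b a' b', part a = part a' → part b = part b' → part b = part a + 1 →
      G.Adj a b → G.Adj a' b' → ¬ G.Adj a b' → ¬ G.Adj a' b → False) :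
    IsCyclic3Letter G := by
  classical
  have f3 : ∀ x y : Fin 3, x = y ∨ y = x + 1 ∨ x = y + 1 := by decide
  have f3a : ∀ x : Fin 3, x + 1 ≠ x := by decide
  have f3b : ∀ x : Fin 3, x + 1 + 1 ≠ x := by decide
  have f3c : ∀ x : Fin 3, x + 1 + 1 + 1 = x := by decide
  have f3d : ∀ x : Fin 3, x = 0 ∨ x = 1 ∨ x = 2 := by decide
  have htri' : ∀ a b c, part b = part a + 1 → part c = part b + 1 →
      ¬ G.Adj a b → ¬ G.Adj b c → ¬ G.Adj a c → False := by
    intro a b c h1 h2 n1 n2 n3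
    have n1' := fun h => n1 (G.adj_symm h)
    have n2' := fun h => n2 (G.adj_symm h)
    have n3' := fun h => n3 (G.adj_symm h)
    rw [h1] at h2
    rcases f3d (part a) with h | h | h <;> rw [h] at h1 h2
    · exact htri a b c h h1 h2 n1 n2 n3
    · exact htri c a b h2 h h1 n3' n1 n2'
    · exact htri b c a h1 h2 h n2 n3' n1'
  obtain ⟨R, hR⟩ : ∃ R : V → V → Prop, ∀ u v, R u v ↔
    ((part v = part u + 1 ∧ G.Adj u v) ∨ (part u = part v + 1 ∧ ¬ G.Adj u v)) := ⟨_, fun _ _ => Iff.rfl⟩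
  have Rne : ∀ u v, R u v → part u ≠ part v := by
    intro u v h e
    rw [hR] at h
    rcases h with h | h
    · exact f3a _ (h.1.symm.trans e.symm)
    · exact f3a _ (h.1.symm.trans e)
  have Rtot : ∀ u v, part u ≠ part v → R u v ∨ R v u := by
    intro u v h
    have := f3 (part u) (part v)
    have := G.adj_comm u v
    rw [hR, hR]; tauto
  have Ras : ∀ u v, R u v → R v u → False := by
    intro u v h h'
    have := G.adj_comm u v
    rw [hR] at h h'
    rcases h with h | h <;> rcases h' with h' | h'
    · exact f3b _ ((h'.1.trans (by rw [h.1])).symm)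
    · tauto
    · tauto
    · exact f3b _ ((h'.1.trans (by rw [h.1])).symm)
  have R3 : ∀ a b c, R a b → R b c → R c a → False := by
    intro a b c h1 h2 h3
    have d1 := f3a (part a)
    have d2 := f3b (part a)
    have d3 := f3c (part a)
    have ac1 := G.adj_comm a b
    have ac2 := G.adj_comm b c
    have ac3 := G.adj_comm c a
    have e1 := f3a (part c)
    have e2 := f3b (part c)
    have e3 := f3c (part c)
    have e1 := f3a (part b)
    have e2 := f3b (part b)
    have e3 := f3c (part b)
    have k1 := hK a b c
    have k2 := htri' a c b
    rw [hR] at h1 h2 h3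
    grind
  have R3' : ∀ a b c, R a b → R b c → part a ≠ part c → R a c := by
    intro a b c h1 h2 h3
    rcases Rtot a c h3 with h | h
    · exact h
    · exact (R3 _ _ _ h1 h2 h).elim
  have R4 : ∀ a b c d, R a b → R b c → R c d → R d a → part a = part c → False := by
    intro a b c d h1 h2' h3 h4 hac
    by_cases hbd : part b = part d
    · rw [hR] at h1 h2' h3 h4
      have := f3b (part a)
      have ac1 := G.adj_comm a b
      have ac2 := G.adj_comm b c
      have ac3 := G.adj_comm c d
      have ac4 := G.adj_comm d a
      have k1 := h2 a b c d hac hbd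
      have k2 := h2 b a d c hbd hac
      grind
    · rcases Rtot b d hbd with h | h
      · exact R3 _ _ _ h1 h h4
      · exact R3 _ _ _ h2' h3 h
  obtain ⟨S, hS⟩ : ∃ S : V → V → Prop, ∀ u v, S u v ↔
    (R u v ∨ (part u = part v ∧ ∃ z, R u z ∧ R z v)) := ⟨_, fun _ _ => Iff.rfl⟩
  have Sirr : ∀ u, ¬ S u u := by
    intro u h
    rw [hS] at h
    rcases h with h | ⟨-, z, h, h'⟩
    · exact Rne _ _ h rfl
    · exact Ras _ _ h h'
  have SR : ∀ u v t, S u v → R v t → S u t := by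
    intro u v t h h'
    rw [hS] at h ⊢
    rcases h with h | ⟨e, z, h1, h2'⟩
    · by_cases e : part u = part t
      · exact Or.inr ⟨e, v, h, h'⟩
      · exact Or.inl (R3' _ _ _ h h' e)
    · have e' : part u ≠ part t := e ▸ Rne _ _ h'
      rcases Rtot u t e' with k | k
      · exact Or.inl k
      · exact (R4 _ _ _ _ h1 h2' h' k e).elim
  have Str : ∀ u v t, S u v → S v t → S u t := by
    intro u v t h h'
    rw [hS v t] at h'
    rcases h' with h' | ⟨-, z, h1, h2'⟩
    · exact SR _ _ _ h h'
    · exact SR _ _ _ (SR _ _ _ h h1) h2'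
  have ipo : IsPartialOrder V (fun u v => u = v ∨ S u v) := by
    refine { refl := fun a => Or.inl rfl, trans := ?_, antisymm := ?_ }
    · rintro a b c (rfl | h) (rfl | h')
      · exact Or.inl rfl
      · exact Or.inr h'
      · exact Or.inr h
      · exact Or.inr (Str _ _ _ h h')
    · rintro a b (rfl | h) (h' | h')
      · rfl
      · rfl
      · exact h'.symm
      · exact (Sirr _ (Str _ _ _ h h')).elim
  obtain ⟨L, hL, hle⟩ := extend_partialOrder (fun u v => u = v ∨ S u v)
  let lo : LinearOrder V :=
    { le := L
      le_refl := hL.refl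
      le_trans := hL.trans
      le_antisymm := hL.antisymm
      le_total := hL.total
      toDecidableLE := Classical.decRel _ }
  have hlt : ∀ u v, R u v → u < v := by
    intro u v h
    refine lt_of_le_of_ne (hle u v (Or.inr ((hS u v).2 (Or.inl h)))) ?_
    rintro rfl
    exact Rne _ _ h rfl
  let e := monoEquivOfFin V (rfl : Fintype.card V = Fintype.card V)
  refine ⟨Fintype.card V, fun i => part (e i), ⟨⟨e.symm.toEquiv, ?_⟩⟩⟩
  intro u v
  change ((e.symm u < e.symm v ∧ cyclicDecoder (part (e (e.symm u))) (part (e (e.symm v)))) ∨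
    (e.symm v < e.symm u ∧ cyclicDecoder (part (e (e.symm v))) (part (e (e.symm u))))) ↔ G.Adj u v
  simp only [OrderIso.apply_symm_apply, OrderIso.lt_iff_lt, dec_iff]
  have := hlt u v
  have := hlt v u
  have := hR u v
  have := hR v u
  have := f3 (part u) (part v)
  have := hind u v
  have := G.adj_comm u v
  have : u < v → ¬ v < u := fun h => lt_asymm h
  tauto

theorem rainbow_letter {n : ℕ} (w : Fin n → Fin 3) (i j k : Fin n) (h1 : w i ≠ w j)
    (h2 : w j ≠ w k) (h3 : w i ≠ w k) (n1 : ¬ (letterGraph cyclicDecoder w).Adj i j)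
    (n2 : ¬ (letterGraph cyclicDecoder w).Adj j k)
    (n3 : ¬ (letterGraph cyclicDecoder w).Adj i k) : False := by
  simp only [letterGraph, dec_iff] at n1 n2 n3
  have d1 : i ≠ j := by rintro rfl; exact h1 rfl
  have d2 : j ≠ k := by rintro rfl; exact h2 rfl
  have d3 : i ≠ k := by rintro rfl; exact h3 rfl
  generalize w i = x at *
  generalize w j = y at *
  generalize w k = z at *
  fin_cases x <;> fin_cases y <;> fin_cases z <;> simp at * <;> omega

theorem tri_letter {n : ℕ} (w : Fin n → Fin 3) (i j k : Fin n)
    (n1 : (letterGraph cyclicDecoder w).Adj i j)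
    (n2 : (letterGraph cyclicDecoder w).Adj j k)
    (n3 : (letterGraph cyclicDecoder w).Adj i k) : False := by
  simp only [letterGraph, dec_iff] at n1 n2 n3
  generalize w i = x at *
  generalize w j = y at *
  generalize w k = z at *
  fin_cases x <;> fin_cases y <;> fin_cases z <;> simp at * <;> omega

theorem ne_letter {n : ℕ} (w : Fin n → Fin 3) (i j : Fin n)
    (n1 : (letterGraph cyclicDecoder w).Adj i j) : w i ≠ w j := by
  simp only [letterGraph, dec_iff] at n1
  generalize w i = x at *
  generalize w j = y at *
  fin_cases x <;> fin_cases y <;> simp at *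

theorem two_letter {n : ℕ} (w : Fin n → Fin 3) (a b c d : Fin n)
    (e1 : w a = w c) (e2 : w b = w d)
    (n1 : (letterGraph cyclicDecoder w).Adj a b)
    (n2 : (letterGraph cyclicDecoder w).Adj c d)
    (n3 : ¬ (letterGraph cyclicDecoder w).Adj a d)
    (n4 : ¬ (letterGraph cyclicDecoder w).Adj c b) : False := by
  have hne := ne_letter w a b n1
  have d1 : a ≠ d := by rintro rfl; exact hne e2.symm
  have d2 : c ≠ b := by rintro rfl; exact hne e1
  simp only [letterGraph, dec_iff, ← e1, ← e2] at n1 n2 n3 n4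
  generalize w a = x at *
  generalize w b = y at *
  fin_cases x <;> fin_cases y <;> simp at * <;> omega

theorem no_twoK2K1 {n : ℕ} (w : Fin n → Fin 3) :
    IsEmpty (twoK2K1 ↪g letterGraph cyclicDecoder w) := by
  constructor
  intro f
  have T : ∀ i j k : Fin 5, ¬ twoK2K1.Adj i j → ¬ twoK2K1.Adj j k → ¬ twoK2K1.Adj i k →
      w (f i) ≠ w (f j) → w (f j) ≠ w (f k) → w (f i) ≠ w (f k) → False := by
    intro i j k a b c h1 h2 h3
    exact rainbow_letter w _ _ _ h1 h2 h3 (by simpa using a) (by simpa using b) (by simpa using c)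
  have E : ∀ i j, twoK2K1.Adj i j → w (f i) ≠ w (f j) := fun i j h =>
    ne_letter w _ _ (f.map_adj_iff.2 h)
  have D : ∀ a b c d, twoK2K1.Adj a b → twoK2K1.Adj c d → ¬ twoK2K1.Adj a d →
      ¬ twoK2K1.Adj c b → w (f a) = w (f c) → w (f b) = w (f d) → False := by
    intro a b c d h1 h2 h3 h4 e1 e2
    exact two_letter w _ _ _ _ e1 e2 (by simpa using h1) (by simpa using h2) (by simpa using h3)
      (by simpa using h4)
  generalize hl : (fun i => w (f i)) = l at *
  have hl' : ∀ i, w (f i) = l i := fun i => congrFun hl i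
  simp only [hl'] at T E D
  clear hl hl'
  have a1 := E 0 1 (by simp [twoK2K1])
  have a2 := E 2 3 (by simp [twoK2K1])
  have b1 := D 0 1 2 3 (by simp [twoK2K1]) (by simp [twoK2K1]) (by simp [twoK2K1]) (by simp [twoK2K1])
  have b2 := D 0 1 3 2 (by simp [twoK2K1]) (by simp [twoK2K1]) (by simp [twoK2K1]) (by simp [twoK2K1])
  have c1 := T 0 2 4 (by simp [twoK2K1]) (by simp [twoK2K1]) (by simp [twoK2K1])
  have c2 := T 0 3 4 (by simp [twoK2K1]) (by simp [twoK2K1]) (by simp [twoK2K1])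
  have c3 := T 1 2 4 (by simp [twoK2K1]) (by simp [twoK2K1]) (by simp [twoK2K1])
  have c4 := T 1 3 4 (by simp [twoK2K1]) (by simp [twoK2K1]) (by simp [twoK2K1])
  clear T E D
  generalize l 0 = x0 at *
  generalize l 1 = x1 at *
  generalize l 2 = x2 at *
  generalize l 3 = x3 at *
  generalize l 4 = x4 at *
  revert x0 x1 x2 x3 x4
  set_option maxRecDepth 20000 in set_option synthInstance.maxSize 5000 in set_option synthInstance.maxHeartbeats 400000 in decide

theorem no_C5K1 {n : ℕ} (w : Fin n → Fin 3) :
    IsEmpty (C5K1 ↪g letterGraph cyclicDecoder w) := by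
  constructor
  intro f
  have T : ∀ i j k : Fin 6, ¬ C5K1.Adj i j → ¬ C5K1.Adj j k → ¬ C5K1.Adj i k →
      w (f i) ≠ w (f j) → w (f j) ≠ w (f k) → w (f i) ≠ w (f k) → False := by
    intro i j k a b c h1 h2 h3
    exact rainbow_letter w _ _ _ h1 h2 h3 (by simpa using a) (by simpa using b) (by simpa using c)
  have E : ∀ i j, C5K1.Adj i j → w (f i) ≠ w (f j) := fun i j h =>
    ne_letter w _ _ (f.map_adj_iff.2 h)
  generalize hl : (fun i => w (f i)) = l at *
  have hl' : ∀ i, w (f i) = l i := fun i => congrFun hl i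
  simp only [hl'] at T E
  clear hl hl'
  have a1 := E 0 1 (by simp [C5K1])
  have a2 := E 1 2 (by simp [C5K1])
  have a3 := E 2 3 (by simp [C5K1])
  have a4 := E 3 4 (by simp [C5K1])
  have a5 := E 4 0 (by simp [C5K1])
  have c1 := T 0 2 5 (by simp [C5K1]) (by simp [C5K1]) (by simp [C5K1])
  have c2 := T 1 3 5 (by simp [C5K1]) (by simp [C5K1]) (by simp [C5K1])
  have c3 := T 2 4 5 (by simp [C5K1]) (by simp [C5K1]) (by simp [C5K1])
  have c4 := T 3 0 5 (by simp [C5K1]) (by simp [C5K1]) (by simp [C5K1])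
  have c5 := T 4 1 5 (by simp [C5K1]) (by simp [C5K1]) (by simp [C5K1])
  clear T E
  generalize l 0 = x0 at *
  generalize l 1 = x1 at *
  generalize l 2 = x2 at *
  generalize l 3 = x3 at *
  generalize l 4 = x4 at *
  generalize l 5 = x5 at *
  clear f
  revert x0 x1 x2 x3 x4 x5
  set_option maxRecDepth 20000 in set_option synthInstance.maxSize 5000 in set_option synthInstance.maxHeartbeats 400000 in decide

theorem no_C6 {n : ℕ} (w : Fin n → Fin 3) :
    IsEmpty (C6 ↪g letterGraph cyclicDecoder w) := by
  constructor
  intro f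
  have T : ∀ i j k : Fin 6, ¬ C6.Adj i j → ¬ C6.Adj j k → ¬ C6.Adj i k →
      w (f i) ≠ w (f j) → w (f j) ≠ w (f k) → w (f i) ≠ w (f k) → False := by
    intro i j k a b c h1 h2 h3
    exact rainbow_letter w _ _ _ h1 h2 h3 (by simpa using a) (by simpa using b) (by simpa using c)
  have E : ∀ i j, C6.Adj i j → w (f i) ≠ w (f j) := fun i j h =>
    ne_letter w _ _ (f.map_adj_iff.2 h)
  have D : ∀ a b c d, C6.Adj a b → C6.Adj c d → ¬ C6.Adj a d →
      ¬ C6.Adj c b → w (f a) = w (f c) → w (f b) = w (f d) → False := by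
    intro a b c d h1 h2 h3 h4 e1 e2
    exact two_letter w _ _ _ _ e1 e2 (by simpa using h1) (by simpa using h2) (by simpa using h3)
      (by simpa using h4)
  generalize hl : (fun i => w (f i)) = l at *
  have hl' : ∀ i, w (f i) = l i := fun i => congrFun hl i
  simp only [hl'] at T E D
  clear hl hl'
  have a1 := E 0 1 (by simp [C6])
  have a2 := E 1 2 (by simp [C6])
  have a3 := E 2 3 (by simp [C6])
  have a4 := E 3 4 (by simp [C6])
  have a5 := E 4 5 (by simp [C6])
  have a6 := E 5 0 (by simp [C6])
  have b1 := D 0 1 4 3 (by simp [C6]) (by simp [C6]) (by simp [C6]) (by simp [C6])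
  have b2 := D 1 2 5 4 (by simp [C6]) (by simp [C6]) (by simp [C6]) (by simp [C6])
  have b3 := D 2 3 0 5 (by simp [C6]) (by simp [C6]) (by simp [C6]) (by simp [C6])
  have c1 := T 0 2 4 (by simp [C6]) (by simp [C6]) (by simp [C6])
  have c2 := T 1 3 5 (by simp [C6]) (by simp [C6]) (by simp [C6])
  clear T E D
  generalize l 0 = x0 at *
  generalize l 1 = x1 at *
  generalize l 2 = x2 at *
  generalize l 3 = x3 at *
  generalize l 4 = x4 at *
  generalize l 5 = x5 at *
  clear f
  revert x0 x1 x2 x3 x4 x5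
  set_option maxRecDepth 20000 in set_option synthInstance.maxSize 5000 in set_option synthInstance.maxHeartbeats 400000 in decide


set_option maxHeartbeats 1600000 in
theorem backward {V : Type} [Fintype V] (G : SimpleGraph V)
    (h3 : IsEmpty (K3 ↪g G)) (h22 : IsEmpty (twoK2K1 ↪g G))
    (h5 : IsEmpty (C5K1 ↪g G)) (h6 : IsEmpty (C6 ↪g G)) : IsCyclic3Letter G := by
  classical
  have K : ∀ a b c, G.Adj a b → G.Adj b c → G.Adj a c → False := fun a b c x y z =>
    (emb_K3 x y z).elim h3.elim
  have W : ∀ p q r s t, G.Adj p q → G.Adj r s → ¬ G.Adj p r → ¬ G.Adj p s → ¬ G.Adj q r →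
      ¬ G.Adj q s → ¬ G.Adj p t → ¬ G.Adj q t → ¬ G.Adj r t → ¬ G.Adj s t → False :=
    fun p q r s t a b c d e f g h i j => (emb_twoK2K1 a b c d e f g h i j).elim h22.elim
  by_cases hM : ∃ v x y, G.Adj x y ∧ ¬ G.Adj v x ∧ ¬ G.Adj v y
  swap
  · -- no induced edge plus isolated vertex
    push Not at hM
    rcases isEmpty_or_nonempty V with hV | ⟨⟨q⟩⟩
    · exact build G (fun _ => 0) (fun u => hV.elim u) (fun u => hV.elim u) (fun u => hV.elim u)
        (fun u => hV.elim u)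
    · refine build G (fun u => if G.Adj q u then 0 else 1) ?_ K ?_ ?_
      · intro u v huv
        have := K q u v
        have := hM q u v huv
        split_ifs <;> simp <;> tauto
      · intro a b c _ _ h
        split_ifs at h <;> simp at h
      · intro a b a' b' _ hbb hab e1 e2 n1 n2
        have hb : ¬ G.Adj q b := by
          intro h
          simp only [h, if_true] at hab
          split_ifs at hab <;> simp at hab
        have hb' : ¬ G.Adj q b' := by
          intro h
          simp [h, hb] at hbb
        have k1 := hM b' a b e1 (fun h => n1 h.symm)
        exact hb' (hM q b b' k1.symm hb)
  obtain ⟨v, hv⟩ := hM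
  -- choose an edge outside the neighbourhood of v with maximal degree sum
  let deg : V → ℕ := fun x => (Finset.univ.filter (fun m => ¬ G.Adj v m ∧ G.Adj x m)).card
  obtain ⟨⟨x0, y0⟩, hm, hmax⟩ := Finset.exists_max_image
    (Finset.univ.filter (fun p : V × V => G.Adj p.1 p.2 ∧ ¬ G.Adj v p.1 ∧ ¬ G.Adj v p.2))
    (fun p => deg p.1 + deg p.2) (by
      obtain ⟨x, y, h⟩ := hv
      exact ⟨(x, y), by simpa using h⟩)
  simp only [Finset.mem_filter, Finset.mem_univ, true_and, Prod.forall] at hm hmax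
  obtain ⟨hxy, hx0, hy0⟩ := hm
  have step : ∀ x0 y0, G.Adj x0 y0 → ¬ G.Adj v x0 → ¬ G.Adj v y0 →
      (∀ m, G.Adj x0 m → ¬ G.Adj v m → deg m ≤ deg y0) →
      ∀ i m, G.Adj i m → ¬ G.Adj v i → ¬ G.Adj v m → ¬ G.Adj y0 i → ¬ G.Adj x0 i →
      G.Adj x0 m → False := by
    intro x0 y0 hxy hx0 hy0 hmax i m him hi hm hyi hxi hxm
    have : ∃ x', ¬ G.Adj v x' ∧ G.Adj y0 x' ∧ ¬ G.Adj m x' := by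
      by_contra hcon
      push Not at hcon
      refine absurd (hmax m hxm hm) (not_le.2 (Finset.card_lt_card ?_))
      rw [Finset.ssubset_iff_of_subset]
      · exact ⟨i, by simpa using ⟨hi, him.symm⟩, by simp [hyi]⟩
      · intro x' hx'
        simp only [Finset.mem_filter, Finset.mem_univ, true_and] at hx' ⊢
        exact ⟨hx'.1, hcon x' hx'.1 hx'.2⟩
    obtain ⟨x', h1, h2, h3'⟩ := this
    have hmy : ¬ G.Adj m y0 := fun h => K x0 m y0 hxm h hxy
    have hxx : ¬ G.Adj x0 x' := fun h => K x0 y0 x' hxy h2 h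
    have ix : G.Adj i x' := by
      by_contra hn
      exact W i m x' y0 v him h2.symm hn (fun h => hyi h.symm) h3' hmy
        (fun h => hi h.symm) (fun h => hm h.symm) (fun h => h1 h.symm) (fun h => hy0 h.symm)
    refine (emb_C5K1 (t := v) him hxm.symm hxy h2 ix.symm (fun h => hxi h.symm) hmy hxx hyi
      (fun h => h3' h.symm) (fun h => hi h.symm) (fun h => hm h.symm)
      (fun h => hx0 h.symm) (fun h => hy0 h.symm) (fun h => h1 h.symm)).elim h5.elim
  -- vertices nonadjacent to v, x0, y0 are isolated outside N(v)
  have iso : ∀ i m, G.Adj i m → ¬ G.Adj v i → ¬ G.Adj v m → ¬ G.Adj y0 i → ¬ G.Adj x0 i →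
      False := by
    intro i m him hi hm hyi hxi
    by_cases k1 : G.Adj x0 m
    · refine step x0 y0 hxy hx0 hy0 (fun m' a b => ?_) i m him hi hm hyi hxi k1
      have := hmax x0 m' ⟨a, hx0, b⟩
      omega
    by_cases k2 : G.Adj y0 m
    · refine step y0 x0 hxy.symm hy0 hx0 (fun m' a b => ?_) i m him hi hm hxi hyi k2
      have := hmax m' y0 ⟨a.symm, b, hy0⟩
      omega
    exact W i m x0 y0 v him hxy (fun h => hxi h.symm) (fun h => hyi h.symm) (fun h => k1 h.symm)
      (fun h => k2 h.symm) (fun h => hi h.symm) (fun h => hm h.symm) (fun h => hx0 h.symm)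
      (fun h => hy0 h.symm)
  have nv : ∀ a, G.Adj a v → G.Adj v a := fun a h => h.symm
  have B0 : ∀ i b, ¬ G.Adj v i → ¬ G.Adj x0 i → ¬ G.Adj y0 i → G.Adj v b → ¬ G.Adj x0 b →
      ¬ G.Adj y0 b → G.Adj i b := by
    intro i b a1 a2 a3 a4 a5 a6
    by_contra hn
    exact W x0 y0 b v i hxy a4.symm a5 (fun h => hx0 h.symm) a6 (fun h => hy0 h.symm) a2 a3
      (fun h => hn h.symm) a1
  have F5 : ∀ i b b', ¬ G.Adj v i → ¬ G.Adj x0 i → ¬ G.Adj y0 i → G.Adj v b → G.Adj v b' →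
      G.Adj x0 b → G.Adj y0 b' → ¬ G.Adj i b → G.Adj i b' := by
    intro i b b' a1 a2 a3 a4 a5 a6 a7 a8
    by_contra hn
    exact (emb_C5K1 (t := i) a4 a6.symm hxy a7 a5.symm (fun h => hx0 h)
      (fun h => K x0 y0 b hxy h.symm a6) (fun h => K x0 y0 b' hxy a7 h) (fun h => hy0 h.symm)
      (fun h => K v b b' a4 h.symm a5) a1 (fun h => a8 h.symm) a2 a3
      (fun h => hn h.symm)).elim h5.elim
  obtain ⟨S, hS⟩ : ∃ S : V → V → V → Prop, ∀ x y u, S x y u ↔ (¬ G.Adj v u ∧ (G.Adj y u ∨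
    (¬ G.Adj x u ∧ ¬ G.Adj y u ∧ ∀ b, G.Adj v b → ¬ G.Adj y b → G.Adj u b))) :=
    ⟨_, fun _ _ _ => Iff.rfl⟩
  have ind : ∀ x y, (∀ i m, G.Adj i m → ¬ G.Adj v i → ¬ G.Adj v m → ¬ G.Adj y i → ¬ G.Adj x i →
      False) → ∀ u u', S x y u → S x y u' → ¬ G.Adj u u' := by
    intro x y iso u u' h h' hu
    rw [hS] at h h'
    rcases h with ⟨g, h | ⟨p1, p2, -⟩⟩
    · rcases h' with ⟨g', h' | ⟨p1, p2, -⟩⟩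
      · exact K y u u' h hu h'
      · exact iso u' u hu.symm g' g p2 p1
    · exact iso u u' hu g h'.1 p2 p1
  -- no 2K2 between N(v) and a side
  have two : ∀ x y, G.Adj x y → ¬ G.Adj v x → ¬ G.Adj v y → 
      ∀ a b a' b', S x y a → S x y a' → G.Adj v b → G.Adj v b' →
      G.Adj a b → G.Adj a' b' → ¬ G.Adj a b' → ¬ G.Adj a' b → False := by
    intro x y hxy hx hy a b a' b' h h' vb vb' e1 e2 n1 n2
    rw [hS] at h h'
    obtain ⟨g, h⟩ := h
    obtain ⟨g', h'⟩ := h'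
    have nbb : ¬ G.Adj b b' := fun k => K v b b' vb k vb'
    rcases h with h | ⟨p1, p2, p3⟩
    · rcases h' with h' | ⟨q1, q2, q3⟩
      · exact (emb_C6 h e1 vb.symm vb' e2.symm h'.symm
          (fun k => K y a b h e1 k) (fun k => g k.symm) nbb g' (fun k => K y a' b' h' e2 k.symm)
          (fun k => K y a a' h k.symm h') (fun k => hy k.symm) n1 (fun k => n2 k.symm)).elim h6.elim
      · exact n2 (q3 b vb (fun k => K y a b h e1 k))
    · have yb' : G.Adj y b' := by
        by_contra k
        exact n1 (p3 b' vb' k)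
      rcases h' with h' | ⟨q1, q2, q3⟩
      · exact K y a' b' h' e2 yb'
      · have yb : G.Adj y b := by
          by_contra k
          exact n2 (q3 b vb k)
        refine W a b a' b' x e1 e2 ?_ n1 (fun k => n2 k.symm) nbb (fun k => p1 k.symm)
          (fun k => K x y b hxy yb k.symm) (fun k => q1 k.symm) (fun k => K x y b' hxy yb' k.symm)
        intro k
        exact W x y a a' v hxy k p1 q1 p2 q2 (fun h => hx h.symm) (fun h => hy h.symm)
          (fun h => g h.symm) (fun h => g' h.symm)
  have tri : ∀ a b c, S x0 y0 a → G.Adj v b → S y0 x0 c → ¬ G.Adj a b → ¬ G.Adj b c →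
      ¬ G.Adj a c → False := by
    intro a b c ha vb hc n1 n2 n3
    rw [hS] at ha hc
    obtain ⟨ga, ha⟩ := ha
    obtain ⟨gc, hc⟩ := hc
    rcases ha with ha | ⟨p1, p2, p3⟩
    · rcases hc with hc | ⟨q1, q2, q3⟩
      · by_cases bx : G.Adj x0 b
        · exact W v b a y0 c vb ha.symm ga hy0 (fun k => n1 k.symm)
            (fun k => K x0 y0 b hxy k.symm bx) gc n2 n3 (fun k => K x0 y0 c hxy k hc)
        · exact W v b x0 c a vb hc hx0 gc (fun k => bx k.symm) n2 ga (fun k => n1 k.symm)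
            (fun k => K x0 y0 a hxy ha k) (fun k => n3 k.symm)
      · have bx : G.Adj x0 b := by
          by_contra k
          exact n2 (q3 b vb k).symm
        exact W v b a y0 c vb ha.symm ga hy0 (fun k => n1 k.symm)
            (fun k => K x0 y0 b hxy k.symm bx) gc n2 n3 q1
    · have yb : G.Adj y0 b := by
        by_contra k
        exact n1 (p3 b vb k)
      rcases hc with hc | ⟨q1, q2, q3⟩
      · exact W v b x0 c a vb hc hx0 gc (fun k => K x0 y0 b hxy yb k.symm) n2 ga
          (fun k => n1 k.symm) p1 (fun k => n3 k.symm)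
      · exact n2 (q3 b vb (fun k => K x0 y0 b hxy yb k)).symm
  have cover : ∀ u, ¬ G.Adj v u → ¬ S x0 y0 u → S y0 x0 u := by
    intro u hu hn
    rw [hS] at hn ⊢
    refine ⟨hu, ?_⟩
    by_cases k : G.Adj x0 u
    · exact Or.inl k
    by_cases k' : G.Adj y0 u
    · exact absurd ⟨hu, Or.inl k'⟩ hn
    refine Or.inr ⟨k', k, ?_⟩
    have : ∃ b, G.Adj v b ∧ ¬ G.Adj y0 b ∧ ¬ G.Adj u b := by
      by_contra hc
      push Not at hc
      exact hn ⟨hu, Or.inr ⟨k, k', hc⟩⟩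
    obtain ⟨b, b1, b2, b3⟩ := this
    have bx : G.Adj x0 b := by
      by_contra h
      exact b3 (B0 u b hu k k' b1 h b2)
    intro b' hb' hxb'
    by_cases h : G.Adj y0 b'
    · exact F5 u b b' hu k k' b1 hb' bx h b3
    · exact B0 u b' hu k k' hb' hxb' h
  obtain ⟨part, hpart⟩ : ∃ part : V → Fin 3, ∀ u, part u =
    if G.Adj v u then 1 else if S x0 y0 u then 0 else 2 := ⟨_, fun _ => rfl⟩
  have p0 : ∀ u, part u = 0 → S x0 y0 u := by
    intro u h
    rw [hpart] at h
    split_ifs at h with k1 k2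
    · simp at h
    · exact k2
    · simp at h
  have p1 : ∀ u, part u = 1 → G.Adj v u := by
    intro u h
    rw [hpart] at h
    split_ifs at h with k1 k2
    · exact k1
    · simp at h
    · simp at h
  have p2 : ∀ u, part u = 2 → S y0 x0 u := by
    intro u h
    rw [hpart] at h
    split_ifs at h with k1 k2
    · simp at h
    · simp at h
    · exact cover u k1 k2
  have f3d : ∀ x : Fin 3, x = 0 ∨ x = 1 ∨ x = 2 := by decide
  have iso' : ∀ i m, G.Adj i m → ¬ G.Adj v i → ¬ G.Adj v m → ¬ G.Adj x0 i → ¬ G.Adj y0 i →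
      False := fun i m a b c d e => iso i m a b c e d
  refine build G part ?_ K ?_ ?_
  · intro u u' hu he
    rcases f3d (part u) with h | h | h
    · exact ind x0 y0 iso u u' (p0 u h) (p0 u' (he ▸ h)) hu
    · exact K v u u' (p1 u h) hu (p1 u' (he ▸ h))
    · exact ind y0 x0 iso' u u' (p2 u h) (p2 u' (he ▸ h)) hu
  · intro a b c ha hb hc
    exact tri a b c (p0 a ha) (p1 b hb) (p2 c hc)
  · intro a b a' b' haa hbb hab e1 e2 n1 n2
    rcases f3d (part a) with h | h | h
    · have h' : part b = 1 := by rw [hab, h]; rfl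
      exact two x0 y0 hxy hx0 hy0 a b a' b' (p0 a h) (p0 a' (haa ▸ h)) (p1 b h')
        (p1 b' (hbb ▸ h')) e1 e2 n1 n2
    · have h' : part b = 2 := by rw [hab, h]; rfl
      exact two y0 x0 hxy.symm hy0 hx0 b a b' a' (p2 b h') (p2 b' (hbb ▸ h')) (p1 a h)
        (p1 a' (haa ▸ h)) e1.symm e2.symm (fun k => n2 k.symm) (fun k => n1 k.symm)
    · have h' : part b = 0 := by rw [hab, h]; rfl
      have k1 := ((hS _ _ _).1 (p2 a h)).1
      have k2 := ((hS _ _ _).1 (p2 a' (haa ▸ h))).1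
      have k3 := ((hS _ _ _).1 (p0 b h')).1
      have k4 := ((hS _ _ _).1 (p0 b' (hbb ▸ h'))).1
      refine W a b a' b' v e1 e2 ?_ n1 (fun k => n2 k.symm) ?_ (fun k => k1 k.symm)
        (fun k => k3 k.symm) (fun k => k2 k.symm) (fun k => k4 k.symm)
      · exact ind y0 x0 iso' a a' (p2 a h) (p2 a' (haa ▸ h))
      · exact ind x0 y0 iso b b' (p0 b h') (p0 b' (hbb ▸ h'))

/-- A graph is a 3-letter graph with the decoder `{(a,b),(b,c),(c,a)}` iff it is
`(K₃, 2K₂ + K₁, C₅ + K₁, C₆)`-free. -/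
theorem cyclic3Letter_iff_forbidden {V : Type} [Fintype V] (G : SimpleGraph V) :
    IsCyclic3Letter G ↔
      IsEmpty (K3 ↪g G) ∧ IsEmpty (twoK2K1 ↪g G) ∧
      IsEmpty (C5K1 ↪g G) ∧ IsEmpty (C6 ↪g G) := by
  constructor
  · rintro ⟨n, w, ⟨e⟩⟩
    refine ⟨⟨fun f => ?_⟩, ⟨fun f => ?_⟩, ⟨fun f => ?_⟩, ⟨fun f => ?_⟩⟩
    · have g := e.toEmbedding.comp f
      exact tri_letter w (g 0) (g 1) (g 2) (g.map_adj_iff.2 (by simp [K3]))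
        (g.map_adj_iff.2 (by simp [K3])) (g.map_adj_iff.2 (by simp [K3]))
    · exact (no_twoK2K1 w).elim (e.toEmbedding.comp f)
    · exact (no_C5K1 w).elim (e.toEmbedding.comp f)
    · exact (no_C6 w).elim (e.toEmbedding.comp f)
  · rintro ⟨h3, h22, h5, h6⟩
    exact backward G h3 h22 h5 h6
end

section
/- None of the graphs K₃ (the triangle), 2K₂ + K₁ (two disjoint edges plus an isolated vertex), C₅ + K₁ (a chordless 5-cycle plus an isolated vertex), and C₆ (the chordless 6-cycle) is a 3-letter graph with the decoder {(a,b),(b,c),(c,a)} over the alphabet {a,b,c}; equivalently, none of them is nice. -/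
/-- Combined combinatorial conditions on a 3-colouring. -/
def GoodCol {V : Type} (G : SimpleGraph V) (f : V → Fin 3) : Prop :=
  (∀ u v, G.Adj u v → f u ≠ f v) ∧
  (∀ z a b c d, f a ≠ z → f b ≠ z → f c ≠ z → f d ≠ z → G.Adj a b → G.Adj c d →
    ¬ G.Adj a c → ¬ G.Adj a d → ¬ G.Adj b c → ¬ G.Adj b d → False) ∧
  (∀ a b c, f a ≠ f b → f b ≠ f c → f a ≠ f c →
    ¬(G.Adj a b ∧ G.Adj b c ∧ G.Adj a c) ∧ ¬(¬G.Adj a b ∧ ¬G.Adj b c ∧ ¬G.Adj a c))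

theorem twoK2_embed {V : Type} (G : SimpleGraph V) (s : Set V) (a b c d : V)
    (ha : a ∈ s) (hb : b ∈ s) (hc : c ∈ s) (hd : d ∈ s)
    (h1 : G.Adj a b) (h2 : G.Adj c d) (h3 : ¬ G.Adj a c) (h4 : ¬ G.Adj a d)
    (h5 : ¬ G.Adj b c) (h6 : ¬ G.Adj b d) (hE : IsEmpty (twoK2 ↪g G.induce s)) : False := by
  have e1 : a ≠ b := h1.ne
  have e2 : c ≠ d := h2.ne
  have e3 : a ≠ c := by rintro rfl; exact h4 h2
  have e4 : a ≠ d := by rintro rfl; exact h3 h2.symm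
  have e5 : b ≠ c := by rintro rfl; exact h6 h2
  have e6 : b ≠ d := by rintro rfl; exact h5 h2.symm
  refine hE.false ⟨⟨![⟨a, ha⟩, ⟨b, hb⟩, ⟨c, hc⟩, ⟨d, hd⟩], ?_⟩, ?_⟩
  · intro i j h
    fin_cases i <;> fin_cases j <;> simp_all
  · intro i j
    change G.Adj ((![⟨a, ha⟩, ⟨b, hb⟩, ⟨c, hc⟩, ⟨d, hd⟩] : Fin 4 → s) i).1
      ((![⟨a, ha⟩, ⟨b, hb⟩, ⟨c, hc⟩, ⟨d, hd⟩] : Fin 4 → s) j).1 ↔ _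
    have := h1.symm
    have := h2.symm
    have g3 : ¬ G.Adj c a := fun h => h3 h.symm
    have g4 : ¬ G.Adj d a := fun h => h4 h.symm
    have g5 : ¬ G.Adj c b := fun h => h5 h.symm
    have g6 : ¬ G.Adj d b := fun h => h6 h.symm
    fin_cases i <;> fin_cases j <;> simp_all [twoK2]

theorem nice_good {V : Type} (G : SimpleGraph V) (h : IsNice G) : ∃ f, GoodCol G f := by
  classical
  obtain ⟨A, B, C, hU, -, -, -, iA, iB, iC, eAB, eBC, eCA, hT⟩ := h
  have hU' : ∀ v, v ∈ A ∨ v ∈ B ∨ v ∈ C := by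
    intro v
    have : v ∈ A ∪ B ∪ C := hU ▸ Set.mem_univ v
    simpa [or_assoc] using this
  have hf : ∀ v, ∃ k : Fin 3, (k = 0 → v ∈ A) ∧ (k = 1 → v ∈ B) ∧ (k = 2 → v ∈ C) := by
    intro v
    rcases hU' v with h | h | h
    · exact ⟨0, by simp [h]⟩
    · exact ⟨1, by simp [h]⟩
    · exact ⟨2, by simp [h]⟩
  choose f fA fB fC using hf
  have h3 : ∀ k : Fin 3, k = 0 ∨ k = 1 ∨ k = 2 := by decide
  refine ⟨f, ?_, ?_, ?_⟩
  · intro u v huv he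
    rcases h3 (f u) with h | h | h
    · exact iA (fA u h) (fA v (he ▸ h)) huv.ne huv
    · exact iB (fB u h) (fB v (he ▸ h)) huv.ne huv
    · exact iC (fC u h) (fC v (he ▸ h)) huv.ne huv
  · intro z a b c d ha hb hc hd h1 h2 h3' h4 h5 h6
    rcases h3 z with rfl | rfl | rfl
    · have key : ∀ v, f v ≠ 0 → v ∈ B ∪ C := fun v hv => by
        rcases h3 (f v) with h | h | h
        · exact absurd h hv
        · exact Or.inl (fB v h)
        · exact Or.inr (fC v h)
      exact twoK2_embed G _ a b c d (key a ha) (key b hb) (key c hc) (key d hd)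
        h1 h2 h3' h4 h5 h6 eBC
    · have key : ∀ v, f v ≠ 1 → v ∈ C ∪ A := fun v hv => by
        rcases h3 (f v) with h | h | h
        · exact Or.inr (fA v h)
        · exact absurd h hv
        · exact Or.inl (fC v h)
      exact twoK2_embed G _ a b c d (key a ha) (key b hb) (key c hc) (key d hd)
        h1 h2 h3' h4 h5 h6 eCA
    · have key : ∀ v, f v ≠ 2 → v ∈ A ∪ B := fun v hv => by
        rcases h3 (f v) with h | h | h
        · exact Or.inl (fA v h)
        · exact Or.inr (fB v h)
        · exact absurd h hv
      exact twoK2_embed G _ a b c d (key a ha) (key b hb) (key c hc) (key d hd)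
        h1 h2 h3' h4 h5 h6 eAB
  · intro a b c hab hbc hac
    clear iA iB iC eAB eBC eCA hU hU'
    have s1 := G.adj_comm a b
    have s2 := G.adj_comm b c
    have s3 := G.adj_comm a c
    rcases h3 (f a) with h | h | h <;> rcases h3 (f b) with h' | h' | h' <;>
      rcases h3 (f c) with h'' | h'' | h'' <;>
      first
      | exact absurd (h.trans h'.symm) hab
      | exact absurd (h'.trans h''.symm) hbc
      | exact absurd (h.trans h''.symm) hac
      | (have t := hT a (fA a h) b (fB b h') c (fC c h''); clear hT fA fB fC h3 h h' h'' hab hbc hac; tauto)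
      | (have t := hT a (fA a h) c (fB c h'') b (fC b h'); clear hT fA fB fC h3 h h' h'' hab hbc hac; tauto)
      | (have t := hT b (fA b h') a (fB a h) c (fC c h''); clear hT fA fB fC h3 h h' h'' hab hbc hac; tauto)
      | (have t := hT b (fA b h') c (fB c h'') a (fC a h); clear hT fA fB fC h3 h h' h'' hab hbc hac; tauto)
      | (have t := hT c (fA c h'') a (fB a h) b (fC b h'); clear hT fA fB fC h3 h h' h'' hab hbc hac; tauto)
      | (have t := hT c (fA c h'') b (fB b h') a (fC a h); clear hT fA fB fC h3 h h' h'' hab hbc hac; tauto)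

set_option maxHeartbeats 2000000 in
theorem letter_good {n : ℕ} (w : Fin n → Fin 3) : GoodCol (letterGraph cyclicDecoder w) w := by
  have h3 : ∀ k : Fin 3, k = 0 ∨ k = 1 ∨ k = 2 := by decide
  refine ⟨?_, ?_, ?_⟩
  · intro u v huv he
    simp only [letterGraph, cyclicDecoder] at huv
    rcases h3 (w v) with h | h | h <;> simp [he, h] at huv
  · intro z a b c d ha hb hc hd h1 h2 h3' h4 h5 h6
    simp only [letterGraph, cyclicDecoder] at *
    rcases h3 z with rfl | rfl | rfl <;>
    rcases h3 (w a) with h | h | h <;> try (exact absurd h ha)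
    all_goals rcases h3 (w b) with h' | h' | h' <;> try (exact absurd h' hb)
    all_goals try (simp [h, h'] at h1; done)
    all_goals rcases h3 (w c) with g | g | g <;> try (exact absurd g hc)
    all_goals rcases h3 (w d) with g' | g' | g' <;> try (exact absurd g' hd)
    all_goals try (simp [g, g'] at h2; done)
    all_goals
      simp [h, h', g, g'] at h1 h2 h3' h4 h5 h6
      omega
  · intro a b c hab hbc hac
    simp only [letterGraph, cyclicDecoder]
    have : a ≠ b := by rintro rfl; exact hab rfl
    have : b ≠ c := by rintro rfl; exact hbc rfl
    have : a ≠ c := by rintro rfl; exact hac rfl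
    rcases h3 (w a) with h | h | h <;> rcases h3 (w b) with h' | h' | h' <;>
    rcases h3 (w c) with g | g | g <;> simp [h, h', g] at * <;> omega

theorem cyc_good {V : Type} (G : SimpleGraph V) (h : IsCyclic3Letter G) : ∃ f, GoodCol G f := by
  obtain ⟨n, w, ⟨e⟩⟩ := h
  obtain ⟨p, q, r⟩ := letter_good w
  refine ⟨fun v => w (e v), ?_, ?_, ?_⟩
  · intro u v h
    exact p _ _ (e.map_adj_iff.2 h)
  · intro z a b c d
    have := q z (e a) (e b) (e c) (e d)
    simpa only [e.map_adj_iff] using this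
  · intro a b c
    have := r (e a) (e b) (e c)
    simpa only [e.map_adj_iff] using this

theorem bad_both {V : Type} (G : SimpleGraph V) (h : ∀ f, ¬ GoodCol G f) :
    ¬ IsCyclic3Letter G ∧ ¬ IsNice G :=
  ⟨fun k => (cyc_good G k).elim h, fun k => (nice_good G k).elim h⟩

theorem K3_bad (f) : ¬ GoodCol K3 f := by
  rintro ⟨p, -, r⟩
  have a01 : K3.Adj 0 1 := by simp [K3]
  have a12 : K3.Adj 1 2 := by simp [K3]
  have a02 : K3.Adj 0 2 := by simp [K3]
  exact (r 0 1 2 (p _ _ a01) (p _ _ a12) (p _ _ a02)).1 ⟨a01, a12, a02⟩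

set_option maxRecDepth 100000 in
set_option synthInstance.maxHeartbeats 400000 in
set_option synthInstance.maxSize 2000 in
set_option maxHeartbeats 2000000 in
theorem twoK2K1_bad (f) : ¬ GoodCol twoK2K1 f := by
  rintro ⟨p, q, r⟩
  have p1 := p 0 1 (by simp [twoK2K1])
  have p2 := p 2 3 (by simp [twoK2K1])
  have q1 := fun z => q z 0 1 2 3
  have r1 := r 0 2 4
  have r2 := r 0 3 4
  have r3 := r 1 2 4
  have r4 := r 1 3 4
  simp [twoK2K1] at q1 r1 r2 r3 r4
  clear p q r
  generalize f 0 = x0 at *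
  generalize f 1 = x1 at *
  generalize f 2 = x2 at *
  generalize f 3 = x3 at *
  generalize f 4 = x4 at *
  revert x0 x1 x2 x3 x4
  decide

set_option maxRecDepth 100000 in
set_option synthInstance.maxHeartbeats 400000 in
set_option synthInstance.maxSize 2000 in
set_option maxHeartbeats 2000000 in
theorem C5K1_bad (f) : ¬ GoodCol C5K1 f := by
  rintro ⟨p, -, r⟩
  have p1 := p 0 1 (by simp [C5K1])
  have p2 := p 1 2 (by simp [C5K1])
  have p3 := p 2 3 (by simp [C5K1])
  have p4 := p 3 4 (by simp [C5K1])
  have p5 := p 4 0 (by simp [C5K1])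
  have r1 := r 0 2 5
  have r2 := r 1 3 5
  have r3 := r 2 4 5
  have r4 := r 3 0 5
  have r5 := r 4 1 5
  simp [C5K1] at r1 r2 r3 r4 r5
  clear p r
  generalize f 0 = x0 at *
  generalize f 1 = x1 at *
  generalize f 2 = x2 at *
  generalize f 3 = x3 at *
  generalize f 4 = x4 at *
  generalize f 5 = x5 at *
  revert x0 x1 x2 x3 x4 x5
  decide

set_option maxRecDepth 100000 in
set_option synthInstance.maxHeartbeats 400000 in
set_option synthInstance.maxSize 2000 in
set_option maxHeartbeats 2000000 in
theorem C6_bad (f) : ¬ GoodCol C6 f := by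
  rintro ⟨p, q, r⟩
  have p1 := p 0 1 (by simp [C6])
  have p2 := p 1 2 (by simp [C6])
  have p3 := p 2 3 (by simp [C6])
  have p4 := p 3 4 (by simp [C6])
  have p5 := p 4 5 (by simp [C6])
  have p6 := p 5 0 (by simp [C6])
  have q1 := fun z => q z 0 1 3 4
  have q2 := fun z => q z 1 2 4 5
  have q3 := fun z => q z 2 3 5 0
  have r1 := r 0 2 4
  have r2 := r 1 3 5
  simp [C6] at q1 q2 q3 r1 r2
  clear p q r
  generalize f 0 = x0 at *
  generalize f 1 = x1 at *
  generalize f 2 = x2 at *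
  generalize f 3 = x3 at *
  generalize f 4 = x4 at *
  generalize f 5 = x5 at *
  revert x0 x1 x2 x3 x4 x5
  decide

/-- None of `K₃`, `2K₂ + K₁`, `C₅ + K₁`, `C₆` is a 3-letter graph with the decoder
`{(a,b),(b,c),(c,a)}`; equivalently, none of them is nice. -/
theorem forbidden_not_cyclic3Letter :
    (¬ IsCyclic3Letter K3 ∧ ¬ IsNice K3) ∧
    (¬ IsCyclic3Letter twoK2K1 ∧ ¬ IsNice twoK2K1) ∧
    (¬ IsCyclic3Letter C5K1 ∧ ¬ IsNice C5K1) ∧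
    (¬ IsCyclic3Letter C6 ∧ ¬ IsNice C6) := by
  exact ⟨bad_both _ K3_bad, bad_both _ twoK2K1_bad, bad_both _ C5K1_bad, bad_both _ C6_bad⟩
end

section
/- If a graph G contains no induced subgraph isomorphic to K₃, 2K₂, or C₅ + K₁, and G contains an induced chordless 5-cycle, then the vertex set of G can be partitioned into five independent sets V₁,…,V₅ (indices mod 5) such that every vertex of V_i is adjacent to every vertex of V_{i+1} and non-adjacent to every vertex of V_{i+2}; in particular G is nice (for instance with the partition (V₁ ∪ V₄), (V₂ ∪ V₅), V₃) and hence a 3-letter graph with the decoder {(a,b),(b,c),(c,a)}. -/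
/-- The chordless 5-cycle `C₅`. -/
def C5 : SimpleGraph (Fin 5) :=
  SimpleGraph.fromEdgeSet {s(0,1), s(1,2), s(2,3), s(3,4), s(4,0)}

theorem aux_tri {V : Type} (G : SimpleGraph V) (hK3 : IsEmpty (K3 ↪g G)) (x y z : V)
    (h1 : G.Adj x y) (h2 : G.Adj y z) (h3 : G.Adj x z) : False := by
  have a1 := h1.ne
  have a2 := h2.ne
  have a3 := h3.ne
  refine hK3.false ⟨⟨![x, y, z], ?_⟩, ?_⟩
  · intro i j h
    fin_cases i <;> fin_cases j <;> simp_all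
  · intro i j
    have b1 := h1.symm
    have b2 := h2.symm
    have b3 := h3.symm
    change G.Adj (![x, y, z] i) (![x, y, z] j) ↔ _
    fin_cases i <;> fin_cases j <;> simp_all [K3]

theorem aux_two {V : Type} (G : SimpleGraph V) (h2 : IsEmpty (twoK2 ↪g G)) (a b c d : V)
    (hab : G.Adj a b) (hcd : G.Adj c d) (hac : ¬ G.Adj a c) (had : ¬ G.Adj a d)
    (hbc : ¬ G.Adj b c) (hbd : ¬ G.Adj b d) : False := by
  have n1 := hab.ne
  have n2 := hcd.ne
  have n3 : a ≠ c := by rintro rfl; exact had hcd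
  have n4 : a ≠ d := by rintro rfl; exact hac hcd.symm
  have n5 : b ≠ c := by rintro rfl; exact hbd hcd
  have n6 : b ≠ d := by rintro rfl; exact hbc hcd.symm
  have hba := hab.symm
  have hdc := hcd.symm
  have hca : ¬ G.Adj c a := fun h => hac h.symm
  have hda : ¬ G.Adj d a := fun h => had h.symm
  have hcb : ¬ G.Adj c b := fun h => hbc h.symm
  have hdb : ¬ G.Adj d b := fun h => hbd h.symm
  refine h2.false ⟨⟨![a, b, c, d], ?_⟩, ?_⟩
  · intro i j h
    fin_cases i <;> fin_cases j <;> simp_all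
  · intro i j
    change G.Adj (![a, b, c, d] i) (![a, b, c, d] j) ↔ _
    fin_cases i <;> fin_cases j <;> simp_all [twoK2]

theorem aux_C5 (i j : Fin 5) : C5.Adj i j ↔ (j = i + 1 ∨ i = j + 1) := by
  simp only [C5, SimpleGraph.fromEdgeSet_adj, Set.mem_insert_iff, Set.mem_singleton_iff]
  revert i j
  decide

theorem aux_iso {V : Type} (G : SimpleGraph V) (h : IsEmpty (C5K1 ↪g G)) (f : C5 ↪g G) (v : V) :
    ∃ i, G.Adj v (f i) := by
  by_contra! hn
  have hv : ∀ i, v ≠ f i := by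
    rintro i rfl
    exact hn (i + 1) (f.map_rel_iff.2 ((aux_C5 _ _).2 (Or.inl rfl)))
  have hn' : ∀ i, ¬ G.Adj (f i) v := fun i h => hn i h.symm
  refine h.false ⟨⟨Fin.snoc (α := fun _ => V) (fun i : Fin 5 => f i) v, ?_⟩, ?_⟩
  · intro i j
    refine Fin.lastCases ?_ (fun i => ?_) i <;> refine Fin.lastCases ?_ (fun j => ?_) j
    · simp
    · simp only [Fin.snoc_last, Fin.snoc_castSucc]
      intro h; exact absurd h (hv _)
    · simp only [Fin.snoc_last, Fin.snoc_castSucc]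
      intro h; exact absurd h.symm (hv _)
    · simp only [Fin.snoc_castSucc]
      intro h; rw [f.injective h]
  · intro i j
    have hl : ∀ i : Fin 5, ¬ C5K1.Adj i.castSucc (Fin.last 5) := by
      simp only [C5K1, SimpleGraph.fromEdgeSet_adj, Set.mem_insert_iff, Set.mem_singleton_iff]
      decide
    have hc : ∀ i j : Fin 5, C5K1.Adj i.castSucc j.castSucc ↔ (j = i + 1 ∨ i = j + 1) := by
      simp only [C5K1, SimpleGraph.fromEdgeSet_adj, Set.mem_insert_iff, Set.mem_singleton_iff]
      decide
    change G.Adj (Fin.snoc (α := fun _ => V) (fun i : Fin 5 => f i) v i)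
      (Fin.snoc (α := fun _ => V) (fun i : Fin 5 => f i) v j) ↔ _
    refine Fin.lastCases ?_ (fun i => ?_) i <;> refine Fin.lastCases ?_ (fun j => ?_) j
    · simp
    · simp only [Fin.snoc_last, Fin.snoc_castSucc]
      exact ⟨fun h => absurd h (hn _), fun h => absurd h.symm (hl _)⟩
    · simp only [Fin.snoc_last, Fin.snoc_castSucc]
      exact ⟨fun h => absurd h (hn' _), fun h => absurd h (hl _)⟩
    · simp only [Fin.snoc_castSucc]
      rw [hc, ← aux_C5]
      exact f.map_rel_iff

/-- The blow-up structure, as a colouring. -/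
theorem aux_col {V : Type} (G : SimpleGraph V)
    (hK3 : IsEmpty (K3 ↪g G)) (h2K2 : IsEmpty (twoK2 ↪g G))
    (hC5K1 : IsEmpty (C5K1 ↪g G)) (f : C5 ↪g G) :
    ∃ k : V → Fin 5, ∀ x y, G.Adj x y ↔ (k y = k x + 1 ∨ k x = k y + 1) := by
  have tri := aux_tri G hK3
  have two := aux_two G h2K2
  have iso := aux_iso G hC5K1 f
  have hf : ∀ i j, G.Adj (f i) (f j) ↔ (j = i + 1 ∨ i = j + 1) := fun i j =>
    f.map_rel_iff.trans (aux_C5 i j)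
  have key : ∀ v, ∃ i : Fin 5, ∀ j, G.Adj v (f j) ↔ (j = i + 1 ∨ i = j + 1) := by
    intro v
    -- the neighbourhood is an independent set
    have h1 : ∀ j, G.Adj v (f j) → ¬ G.Adj v (f (j + 1)) := fun j a b =>
      tri v (f j) (f (j + 1)) a ((hf _ _).2 (Or.inl rfl)) b
    have h2 : ∀ j, G.Adj v (f j) → G.Adj v (f (j + 2)) ∨ G.Adj v (f (j + 3)) := by
      intro j a
      by_contra! hc
      refine two v (f j) (f (j + 2)) (f (j + 3)) a ((hf _ _).2 ?_) hc.1 hc.2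
        (fun h => ?_) (fun h => ?_)
      · clear * -
        revert j; decide
      · have := (hf _ _).1 h
        clear * - this
        revert j; decide
      · have := (hf _ _).1 h
        clear * - this
        revert j; decide
    have h3 := iso v
    generalize hp : (fun j => G.Adj v (f j)) = p at *
    have hp' : ∀ j, G.Adj v (f j) ↔ p j := fun j => by rw [← hp]
    simp only [hp'] at *
    clear hp hp'
    classical
    have : ∀ q : Fin 5 → Bool, (∀ j, q j = true → ¬ q (j+1) = true) →
        (∀ j, q j = true → q (j+2) = true ∨ q (j+3) = true) → (∃ j, q j = true) →
        ∃ i : Fin 5, ∀ j, q j = true ↔ (j = i + 1 ∨ i = j + 1) := by decide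
    simpa using this (fun j => decide (p j)) (by simpa using h1) (by simpa using h2)
      (by simpa using h3)
  choose k hk using key
  refine ⟨k, fun x y => ?_⟩
  -- complete to the next class
  have comp : ∀ x y, k y = k x + 1 → G.Adj x y := by
    intro x y h
    by_contra hn
    refine two x (f (k x + 4)) y (f (k x + 2)) ((hk _ _).2 ?_) ((hk _ _).2 ?_) hn
      (fun a => ?_) (fun a => ?_) (fun a => ?_)
    · generalize k x = i; revert i; decide
    · rw [h]; generalize k x = i; revert i; decide
    · have := (hk _ _).1 a
      revert this
      generalize k x = i; revert i; decide
    · have := (hk _ _).1 a.symm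
      rw [h] at this
      revert this
      generalize k x = i; revert i; decide
    · have := (hf _ _).1 a
      revert this
      generalize k x = i; revert i; decide
  constructor
  · intro a
    have hno : ∀ j, ¬ ((j = k x + 1 ∨ k x = j + 1) ∧ (j = k y + 1 ∨ k y = j + 1)) := by
      rintro j ⟨hx, hy⟩
      exact tri x y (f j) a ((hk _ _).2 hy) ((hk _ _).2 hx)
    revert hno
    generalize k x = i
    generalize k y = j
    revert i j
    decide
  · rintro (h | h)
    · exact comp x y h
    · exact (comp y x h).symm

theorem aux_letter {V : Type} [Fintype V] (G : SimpleGraph V) (k : V → Fin 5)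
    (hk : ∀ x y, G.Adj x y ↔ (k y = k x + 1 ∨ k x = k y + 1)) : IsCyclic3Letter G := by
  let e0 := Fintype.equivFin V
  let g : Fin (Fintype.card V) → Fin 5 := k ∘ e0.symm
  have hm : Monotone (g ∘ Tuple.sort g) := Tuple.monotone_sort g
  let e : V ≃ Fin (Fintype.card V) := e0.trans (Tuple.sort g).symm
  have he : ∀ v, (g ∘ Tuple.sort g) (e v) = k v := by
    intro v
    simp [g, e]
  let L : Fin 5 → Fin 3 := ![0, 1, 2, 0, 1]
  refine ⟨Fintype.card V, fun i => L ((g ∘ Tuple.sort g) i), ⟨⟨e, ?_⟩⟩⟩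
  intro x y
  show ((e x < e y ∧ cyclicDecoder (L ((g ∘ Tuple.sort g) (e x))) (L ((g ∘ Tuple.sort g) (e y))))
    ∨ (e y < e x ∧ cyclicDecoder (L ((g ∘ Tuple.sort g) (e y))) (L ((g ∘ Tuple.sort g) (e x))))) ↔ _
  have D : ∀ i j : Fin 5, i ≤ j → (cyclicDecoder (L i) (L j) ↔ (j = i + 1 ∨ i = j + 1)) := by
    simp only [L, cyclicDecoder]
    decide
  rw [hk, he, he]
  rcases lt_trichotomy (e x) (e y) with h | h | h
  · have hle := hm h.le
    rw [he, he] at hle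
    rw [D _ _ hle]
    simp [h, not_lt_of_gt h]
  · have hxy : x = y := e.injective h
    subst hxy
    simp
  · have hle := hm h.le
    rw [he, he] at hle
    rw [D _ _ hle]
    simp [h, not_lt_of_gt h, or_comm]

/-- If `G` is `(K₃, 2K₂, C₅ + K₁)`-free and contains an induced `C₅`, then `V(G)` is
partitioned into five independent sets `V₀,…,V₄` (indices mod 5) with `Vᵢ` complete to
`Vᵢ₊₁` and anticomplete to `Vᵢ₊₂`; in particular `G` is nice (e.g. with the partition
`(V₀ ∪ V₃), (V₁ ∪ V₄), V₂`) and hence a 3-letter graph with decoder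
`{(a,b),(b,c),(c,a)}`. -/
theorem blowup_C5_structure {V : Type} [Fintype V] (G : SimpleGraph V)
    (hK3 : IsEmpty (K3 ↪g G)) (h2K2 : IsEmpty (twoK2 ↪g G))
    (hC5K1 : IsEmpty (C5K1 ↪g G)) (hC5 : Nonempty (C5 ↪g G)) :
    (∃ P : ZMod 5 → Set V,
      (∀ v : V, ∃! i : ZMod 5, v ∈ P i) ∧
      (∀ i : ZMod 5, IsIndepSetOn G (P i)) ∧
      (∀ i : ZMod 5, ∀ x ∈ P i, ∀ y ∈ P (i + 1), G.Adj x y) ∧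
      (∀ i : ZMod 5, ∀ x ∈ P i, ∀ y ∈ P (i + 2), ¬ G.Adj x y) ∧
      (P 0 ∪ P 3) ∪ (P 1 ∪ P 4) ∪ P 2 = Set.univ ∧
      NiceTriple G (P 0 ∪ P 3) (P 1 ∪ P 4) (P 2)) ∧
    IsCyclic3Letter G := by
  obtain ⟨f⟩ := hC5
  obtain ⟨k, hk⟩ := aux_col G hK3 h2K2 hC5K1 f
  refine ⟨?_, aux_letter G k hk⟩
  have hind : ∀ s : Set V, IsEmpty (twoK2 ↪g G.induce s) := fun s =>
    ⟨fun g => h2K2.false (g.trans (SimpleGraph.Embedding.induce s))⟩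
  have hmem : ∀ v (i : Fin 5), v ∈ (fun i : Fin 5 => {v | k v = i}) i ↔ k v = i := fun _ _ => Iff.rfl
  refine ⟨fun i : Fin 5 => {v | k v = i}, ?_, ?_, ?_, ?_, ?_, ?_⟩
  · intro v
    exact ⟨k v, rfl, fun j hj => Eq.symm hj⟩
  · intro i x hx y hy _
    change k x = i at hx
    change k y = i at hy
    rw [hk, hx, hy]
    clear * -
    change Fin 5 at i
    revert i; decide
  · intro i x hx y hy
    change k x = i at hx
    change k y = (show Fin 5 from i) + 1 at hy
    rw [hk, hx, hy]
    exact Or.inl rfl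
  · intro (i : Fin 5) x hx y hy
    change k x = i at hx
    change k y = i + 2 at hy
    rw [hk, hx, hy]
    clear * -
    revert i; decide
  · ext v
    change (((k v = 0 ∨ k v = 3) ∨ (k v = 1 ∨ k v = 4)) ∨ k v = 2) ↔ True
    generalize k v = i
    revert i; decide
  · refine ⟨?_, ?_, ?_, ?_, ?_, ?_, hind _, hind _, hind _, ?_⟩
    · rw [Set.disjoint_left]
      intro v h1 h2
      change k v = 0 ∨ k v = 3 at h1
      change k v = 1 ∨ k v = 4 at h2
      revert h1 h2
      generalize k v = i
      revert i; decide
    · rw [Set.disjoint_left]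
      intro v h1 h2
      change k v = 0 ∨ k v = 3 at h1
      change k v = 2 at h2
      revert h1 h2
      generalize k v = i
      revert i; decide
    · rw [Set.disjoint_left]
      intro v h1 h2
      change k v = 1 ∨ k v = 4 at h1
      change k v = 2 at h2
      revert h1 h2
      generalize k v = i
      revert i; decide
    · intro x hx y hy _
      change k x = 0 ∨ k x = 3 at hx
      change k y = 0 ∨ k y = 3 at hy
      rw [hk]
      revert hx hy
      generalize k x = i
      generalize k y = j
      revert i j; decide
    · intro x hx y hy _
      change k x = 1 ∨ k x = 4 at hx
      change k y = 1 ∨ k y = 4 at hy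
      rw [hk]
      revert hx hy
      generalize k x = i
      generalize k y = j
      revert i j; decide
    · intro x hx y hy _
      change k x = 2 at hx
      change k y = 2 at hy
      rw [hk, hx, hy]
      decide
    · intro a ha b hb c hc
      change k a = 0 ∨ k a = 3 at ha
      change k b = 1 ∨ k b = 4 at hb
      change k c = 2 at hc
      simp only [hk]
      rw [hc]
      revert ha hb
      generalize k a = i
      generalize k b = j
      revert i j; decide
end

section
/- In any 3-letter representation of a graph G by a word w over the alphabet {a,b,c} with the decoder {(a,b),(b,c),(c,a)} in which the first letter of w is b and the last letter is c, the following hold: (1) no vertex of G is adjacent to both the vertex of the first letter and the vertex of the last letter; (2) every vertex non-adjacent to both of them is labelled a; (3) every vertex non-adjacent to the first and adjacent to the last is labelled b; (4) every vertex adjacent to the first and non-adjacent to the last is labelled c. -/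
theorem adj_zero_iff_aux (m : ℕ) (w : Fin (m + 1) → Fin 3)
    (hfirst : w 0 = 1) (i : Fin (m + 1)) :
    (letterGraph cyclicDecoder w).Adj i 0 ↔ w i = 2 := by
  simp only [letterGraph, cyclicDecoder, hfirst]
  constructor
  · rintro (⟨h, _⟩ | ⟨_, h⟩)
    · exact absurd h (Fin.not_lt_zero i)
    · simpa using h
  · intro h
    refine Or.inr ⟨Fin.pos_of_ne_zero ?_, by simp [h]⟩
    rintro rfl
    simp [hfirst] at h

theorem adj_last_iff_aux (m : ℕ) (w : Fin (m + 1) → Fin 3)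
    (hlast : w (Fin.last m) = 2) (i : Fin (m + 1)) :
    (letterGraph cyclicDecoder w).Adj i (Fin.last m) ↔ w i = 1 := by
  simp only [letterGraph, cyclicDecoder, hlast]
  constructor
  · rintro (⟨_, h⟩ | ⟨h, _⟩)
    · simpa using h
    · exact absurd h (not_lt.mpr (Fin.le_last i))
  · intro h
    refine Or.inl ⟨Fin.lt_last_iff_ne_last.mpr ?_, by simp [h]⟩
    rintro rfl
    simp [hlast] at h

/-- In any representation of a graph as a letter graph over `{a,b,c} = Fin 3` with the
decoder `{(a,b),(b,c),(c,a)}` by a word starting with `b` and ending with `c`: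
(1) no vertex is adjacent to both the first and the last vertex; (2) every vertex
non-adjacent to both is labelled `a`; (3) every vertex non-adjacent to the first and
adjacent to the last is labelled `b`; (4) every vertex adjacent to the first and
non-adjacent to the last is labelled `c`. -/
theorem first_b_last_c_labels (m : ℕ) (w : Fin (m + 1) → Fin 3)
    (hfirst : w 0 = 1) (hlast : w (Fin.last m) = 2) :
    (∀ i : Fin (m + 1),
      ¬ ((letterGraph cyclicDecoder w).Adj i 0 ∧
         (letterGraph cyclicDecoder w).Adj i (Fin.last m))) ∧
    (∀ i : Fin (m + 1),
      ¬ (letterGraph cyclicDecoder w).Adj i 0 →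
      ¬ (letterGraph cyclicDecoder w).Adj i (Fin.last m) → w i = 0) ∧
    (∀ i : Fin (m + 1),
      ¬ (letterGraph cyclicDecoder w).Adj i 0 →
      (letterGraph cyclicDecoder w).Adj i (Fin.last m) → w i = 1) ∧
    (∀ i : Fin (m + 1),
      (letterGraph cyclicDecoder w).Adj i 0 →
      ¬ (letterGraph cyclicDecoder w).Adj i (Fin.last m) → w i = 2) := by
  simp only [adj_zero_iff_aux m w hfirst, adj_last_iff_aux m w hlast]
  refine ⟨fun i => ?_, fun i => ?_, fun i => ?_, fun i => ?_⟩ <;>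
    generalize w i = x <;> revert x <;> decide
end

section
/- Every permutation that avoids the patterns 321, 2143 and 3142 has at most one descent, i.e., there is at most one index i such that π(i) > π(i+1). -/
/-- `π` contains the pattern `ρ`: there are positions `i₁ < ⋯ < i_k` on which the
values of `π` are in the same relative order as `ρ`. -/
def ContainsPattern {n k : ℕ} (π : Equiv.Perm (Fin n)) (ρ : Equiv.Perm (Fin k)) :
    Prop :=
  ∃ f : Fin k → Fin n, StrictMono f ∧ ∀ s t : Fin k, ρ s < ρ t ↔ π (f s) < π (f t)

/-- The pattern `321`. -/
def p321 : Equiv.Perm (Fin 3) := ⟨![2, 1, 0], ![2, 1, 0], by decide, by decide⟩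

/-- The pattern `2143`. -/
def p2143 : Equiv.Perm (Fin 4) := ⟨![1, 0, 3, 2], ![1, 0, 3, 2], by decide, by decide⟩

/-- The pattern `3142`. -/
def p3142 : Equiv.Perm (Fin 4) := ⟨![2, 0, 3, 1], ![1, 3, 0, 2], by decide, by decide⟩

/-- The pattern `2413`. -/
def p2413 : Equiv.Perm (Fin 4) := ⟨![1, 3, 0, 2], ![2, 0, 3, 1], by decide, by decide⟩

theorem aux_321 {n : ℕ} (π : Equiv.Perm (Fin n)) (a b c : Fin n) (hab : a < b) (hbc : b < c)
    (h1 : π b < π a) (h2 : π c < π b) : ContainsPattern π p321 := by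
  refine ⟨![a, b, c], ?_, ?_⟩
  · intro s t hst
    fin_cases s <;> fin_cases t <;> simp at hst ⊢ <;> order
  · intro s t
    fin_cases s <;> fin_cases t <;> simp [p321] <;> order

theorem aux_2143 {n : ℕ} (π : Equiv.Perm (Fin n)) (a b c d : Fin n) (hab : a < b) (hbc : b < c)
    (hcd : c < d) (h1 : π b < π a) (h2 : π a < π d) (h3 : π d < π c) :
    ContainsPattern π p2143 := by
  refine ⟨![a, b, c, d], ?_, ?_⟩
  · intro s t hst
    fin_cases s <;> fin_cases t <;> simp at hst ⊢ <;> order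
  · intro s t
    fin_cases s <;> fin_cases t <;> simp [p2143] <;> order

theorem aux_3142 {n : ℕ} (π : Equiv.Perm (Fin n)) (a b c d : Fin n) (hab : a < b) (hbc : b < c)
    (hcd : c < d) (h1 : π b < π d) (h2 : π d < π a) (h3 : π a < π c) :
    ContainsPattern π p3142 := by
  refine ⟨![a, b, c, d], ?_, ?_⟩
  · intro s t hst
    fin_cases s <;> fin_cases t <;> simp at hst ⊢ <;> order
  · intro s t
    fin_cases s <;> fin_cases t <;> simp [p3142] <;> order

theorem aux_main (n : ℕ) (π : Equiv.Perm (Fin n))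
    (h321 : ¬ ContainsPattern π p321) (h2143 : ¬ ContainsPattern π p2143)
    (h3142 : ¬ ContainsPattern π p3142) (i j : ℕ) (hi : i + 1 < n) (hj : j + 1 < n)
    (h1 : π ⟨i + 1, hi⟩ < π ⟨i, Nat.lt_of_succ_lt hi⟩)
    (h2 : π ⟨j + 1, hj⟩ < π ⟨j, Nat.lt_of_succ_lt hj⟩) : ¬ i < j := by
  intro hij
  have e1 : (⟨i, Nat.lt_of_succ_lt hi⟩ : Fin n) < ⟨i + 1, hi⟩ := by simp
  have e2 : (⟨j, Nat.lt_of_succ_lt hj⟩ : Fin n) < ⟨j + 1, hj⟩ := by simp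
  have e3 : (⟨i + 1, hi⟩ : Fin n) ≤ ⟨j, Nat.lt_of_succ_lt hj⟩ := by
    simp only [Fin.mk_le_mk]; omega
  generalize (⟨i, Nat.lt_of_succ_lt hi⟩ : Fin n) = a at *
  generalize (⟨i + 1, hi⟩ : Fin n) = b at *
  generalize (⟨j, Nat.lt_of_succ_lt hj⟩ : Fin n) = c at *
  generalize (⟨j + 1, hj⟩ : Fin n) = d at *
  rcases e3.eq_or_lt with h | e3
  · subst h
    exact h321 (aux_321 π a b d e1 e2 h1 h2)
  have hne : ∀ x y : Fin n, x < y → π x ≠ π y := fun x y h e => h.ne (π.injective e)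
  have hac : π a < π c := by
    rcases (hne a c (e1.trans e3)).lt_or_gt with h | h
    · exact h
    · exact absurd (aux_321 π a c d (e1.trans e3) e2 h h2) h321
  have hbd : π b < π d := by
    rcases (hne b d (e3.trans e2)).lt_or_gt with h | h
    · exact h
    · exact absurd (aux_321 π a b d e1 (e3.trans e2) h1 h) h321
  rcases (hne a d (e1.trans (e3.trans e2))).lt_or_gt with h | h
  · exact h2143 (aux_2143 π a b c d e1 e3 e2 h1 h h2)
  · exact h3142 (aux_3142 π a b c d e1 e3 e2 hbd h hac)

/-- Every permutation avoiding `321`, `2143` and `3142` has at most one descent. -/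
theorem avoid_321_2143_3142_at_most_one_descent (n : ℕ) (π : Equiv.Perm (Fin n))
    (h321 : ¬ ContainsPattern π p321) (h2143 : ¬ ContainsPattern π p2143)
    (h3142 : ¬ ContainsPattern π p3142) :
    ∀ (i j : ℕ) (hi : i + 1 < n) (hj : j + 1 < n),
      π ⟨i + 1, hi⟩ < π ⟨i, Nat.lt_of_succ_lt hi⟩ →
      π ⟨j + 1, hj⟩ < π ⟨j, Nat.lt_of_succ_lt hj⟩ → i = j := by
  intro i j hi hj h1 h2
  have := aux_main n π h321 h2143 h3142 i j hi hj h1 h2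
  have := aux_main n π h321 h2143 h3142 j i hj hi h2 h1
  omega
end

section
/- Every permutation π of {1,…,n} that avoids the patterns 321, 2143 and 2413 is the union of two increasing subsequences such that every value of one subsequence is greater than every value of the other: there is a set S of positions such that π is increasing on S and on its complement, and every value π(i) with i ∈ S exceeds every value π(j) with j ∉ S. -/
/-- Every permutation avoiding `321`, `2143` and `2413` is the union of two increasing
subsequences, with every value of one exceeding every value of the other. -/
theorem avoid_321_2143_2413_layered (n : ℕ) (π : Equiv.Perm (Fin n))
    (h321 : ¬ ContainsPattern π p321) (h2143 : ¬ ContainsPattern π p2143)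
    (h2413 : ¬ ContainsPattern π p2413) :
    ∃ S : Set (Fin n),
      (∀ i ∈ S, ∀ j ∈ S, i < j → π i < π j) ∧
      (∀ i ∉ S, ∀ j ∉ S, i < j → π i < π j) ∧
      (∀ i ∈ S, ∀ j ∉ S, π j < π i) := by
  have A : ∀ a b c : Fin n, a < b → b < c → π b < π a → π c < π b → False := by
    intro a b c hab hbc h1 h2
    refine h321 ⟨![a, b, c], ?_, ?_⟩
    · rw [Fin.strictMono_iff_lt_succ]
      intro i; fin_cases i <;> simpa
    · intro s t
      fin_cases s <;> fin_cases t <;> simp [p321] <;> order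
  have B : ∀ a b c d : Fin n, a < b → b < c → c < d → π b < π a → π a < π d →
      π d < π c → False := by
    intro a b c d hab hbc hcd h1 h2 h3
    refine h2143 ⟨![a, b, c, d], ?_, ?_⟩
    · rw [Fin.strictMono_iff_lt_succ]
      intro i; fin_cases i <;> simpa
    · intro s t
      fin_cases s <;> fin_cases t <;> simp [p2143] <;> order
  have C : ∀ a b c d : Fin n, a < b → b < c → c < d → π c < π a → π a < π d →
      π d < π b → False := by
    intro a b c d hab hbc hcd h1 h2 h3
    refine h2413 ⟨![a, b, c, d], ?_, ?_⟩
    · rw [Fin.strictMono_iff_lt_succ]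
      intro i; fin_cases i <;> simpa
    · intro s t
      fin_cases s <;> fin_cases t <;> simp [p2413] <;> order
  have inv : ∀ i j : Fin n, i < j → ¬ π i < π j → π j < π i := by
    intro i j h h'
    exact lt_of_le_of_ne (not_lt.1 h') (fun e => h.ne' (π.injective e))
  refine ⟨{x | ∃ i j, i < j ∧ π j < π i ∧ π i ≤ π x}, ?_, ?_, ?_⟩
  · rintro i - j ⟨k, l, hkl, h1, h2⟩ hij
    by_contra h
    have h3 := inv i j hij h
    rcases eq_or_lt_of_le h2 with e | h4
    · have e := π.injective e
      subst e
      exact A _ _ _ hij hkl h3 h1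
    rcases lt_trichotomy j l with hjl | rfl | hlj
    · exact A i j l hij hjl h3 (h1.trans h4)
    · exact absurd h4 (not_lt.2 h1.le)
    rcases lt_trichotomy i k with hik | rfl | hki
    · exact A i k l hik hkl (h4.trans h3) h1
    · exact absurd h4 (not_lt.2 h3.le)
    rcases lt_trichotomy i l with hil | rfl | hli
    · exact C k i l j hki hil hlj h1 h4 h3
    · order
    · exact B k l i j hkl hli hij h1 h4 h3
  · intro i hi j _ hij
    by_contra h
    exact hi ⟨i, j, hij, inv i j hij h, le_rfl⟩
  · rintro i ⟨k, l, hkl, h1, h2⟩ j hj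
    by_contra h
    exact hj ⟨k, l, hkl, h1, h2.trans (not_lt.1 h)⟩
end
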